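/- (Policy gradient approximation by the finite system.) Let 𝒳, 𝒰, 𝒳⁰, 𝒰⁰ be compact metric spaces, with p, p⁰, r Lipschitz; let the parameter map Γ, the joint policy π̃^θ and its log-gradient ∇_θ log π̃^θ (or gradient ∇_θ π̃^θ) be Lipschitz and uniformly bounded. Let ∇_θ J(π̃^θ) = Σ_{t≥0} γ^t E[ Q^θ(x⁰_t, μ_t, u⁰_t, ξ_t) ∇_θ log π̃^θ(u⁰_t, ξ_t | x⁰_t, μ_t) ] be the exact policy gradient of the limiting M3FC MDP, and let the approximate policy gradient computed on the N-agent M3FC system be ∇̂_θ J(π̃^θ) = Σ_{t≥0} γ^t E[ Q̂^θ(x_t^{0,N}, μ_t^N, u_t^{0,N}, ξ_t^N) ∇_θ log π̃^θ(u_t^{0,N}, ξ_t^N | x_t^{0,N}, μ_t^N) ]. Then ‖ ∇̂_θ J(π̃^θ) − ∇_θ J(π̃^θ) ‖ → 0 as N → ∞, uniformly over policy parameters θ. -/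

import Mathlib

open MeasureTheory

noncomputable instance {X : Type*} [MeasurableSpace X] : MeasurableSpace (ProbabilityMeasure X) :=
  inferInstanceAs (MeasurableSpace {μ : Measure X // IsProbabilityMeasure μ})

/-- `W₁` distance on probability measures, via Kantorovich duality. -/
noncomputable def W1 {X : Type*} [MeasurableSpace X] [PseudoMetricSpace X]
    (μ ν : ProbabilityMeasure X) : ℝ :=
  ⨆ f : {f : X → ℝ // LipschitzWith 1 f},
    |∫ x, (f : X → ℝ) x ∂(μ : Measure X) - ∫ x, (f : X → ℝ) x ∂(ν : Measure X)|

/-- Empirical measure of `N` points (an arbitrary probability measure if `N = 0`). -/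
noncomputable def emp {X : Type*} [MeasurableSpace X] [Nonempty X] (N : ℕ) (x : Fin N → X) :
    ProbabilityMeasure X := by
  classical
  exact if hN : N = 0 then ⟨Measure.dirac (Classical.arbitrary X), inferInstance⟩
  else ⟨(N : ENNReal)⁻¹ • ∑ i : Fin N, Measure.dirac (x i), by
    constructor
    simp only [Measure.smul_apply, Measure.coe_finset_sum, Finset.sum_apply,
      Measure.dirac_apply' _ MeasurableSet.univ, smul_eq_mul]
    simp only [Set.indicator_univ, Pi.one_apply, Finset.sum_const, Finset.card_univ,
      Fintype.card_fin, nsmul_eq_mul, mul_one]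
    exact ENNReal.inv_mul_cancel (by exact_mod_cast hN) (by simp)⟩

/-- Law of `(x⁰_t, (u⁰_t, ξ_t), (x^{i,N}_t)_i)` in the `N`-agent M3FC system under the
parametrized joint policy `π̃^θ` and decision-rule map `Γ`, started from the initial law `ι`:
at each step the joint action `(u⁰,ξ)` is sampled from `π̃^θ(·|x⁰,μ^N)`, each minor agent
samples its action from `Γ(ξ)(·|xⁱ)`, and states transition through `p`, `p⁰`. -/
noncomputable def pLawNFrom {X U X0 U0 Xi Θ : Type*} [MeasurableSpace X] [Nonempty X]
    [MeasurableSpace U] [MeasurableSpace X0] [MeasurableSpace U0] [MeasurableSpace Xi]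
    (p : X → U → X0 → U0 → ProbabilityMeasure X → ProbabilityMeasure X)
    (p0 : X0 → U0 → ProbabilityMeasure X → ProbabilityMeasure X0)
    (Γ : Xi → X → ProbabilityMeasure U)
    (pit : Θ → X0 → ProbabilityMeasure X → ProbabilityMeasure (U0 × Xi))
    (θ : Θ) (N : ℕ) (ι : Measure (X0 × (U0 × Xi) × (Fin N → X))) :
    ℕ → Measure (X0 × (U0 × Xi) × (Fin N → X))
  | 0 => ι
  | t + 1 => (pLawNFrom p p0 Γ pit θ N ι t).bind fun s =>
      (((p0 s.1 s.2.1.1 (emp N s.2.2) : Measure X0)).prod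
        (Measure.pi fun i => ((Γ s.2.1.2 (s.2.2 i) : Measure U)).bind
          fun u => (p (s.2.2 i) u s.1 s.2.1.1 (emp N s.2.2) : Measure X))).bind
        fun y => ((pit θ y.1 (emp N y.2) : Measure (U0 × Xi))).map fun a => (y.1, a, y.2)

/-- Law of `(x⁰_t, (u⁰_t, ξ_t), μ_t)` in the limiting M3FC process under the parametrized
joint policy `π̃^θ`, where `TG x⁰ u⁰ ξ μ` is the deterministic mean field transition
`T(x⁰,u⁰,μ, μ ⊗ Γ(ξ))`, started from the initial law `ι`. -/
noncomputable def pLimLawFrom {X U0 X0 Xi Θ : Type*} [MeasurableSpace X]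
    [MeasurableSpace X0] [MeasurableSpace U0] [MeasurableSpace Xi]
    (p0 : X0 → U0 → ProbabilityMeasure X → ProbabilityMeasure X0)
    (pit : Θ → X0 → ProbabilityMeasure X → ProbabilityMeasure (U0 × Xi))
    (TG : X0 → U0 → Xi → ProbabilityMeasure X → ProbabilityMeasure X)
    (θ : Θ) (ι : Measure (X0 × (U0 × Xi) × ProbabilityMeasure X)) :
    ℕ → Measure (X0 × (U0 × Xi) × ProbabilityMeasure X)
  | 0 => ι
  | t + 1 => (pLimLawFrom p0 pit TG θ ι t).bind fun s =>
      ((p0 s.1 s.2.1.1 s.2.2 : Measure X0)).bind fun y0 =>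
        ((pit θ y0 (TG s.1 s.2.1.1 s.2.1.2 s.2.2) : Measure (U0 × Xi))).map
          fun a => (y0, a, TG s.1 s.2.1.1 s.2.1.2 s.2.2)

/-!
Tested against functions that are Lipschitz for `W₁`, one step of the `N`-agent system differs from
one step of the limiting process only through the deviation of the empirical measure of `N`
independent agents from the average of their laws. By compactness the `1`-Lipschitz functions
are totally bounded up to constants, so this deviation tends to `0` in `W₁` by Chebyshev's
inequality, uniformly over the laws of the agents. The limiting kernel preserves Lipschitz
functions, so after `t` steps the two laws differ by at most a constant times that deviation,
where the constant depends on `t` and the Lipschitz constants of the data but not on `θ`. Expanding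
`Q` turns the gradient into a double series of terms `γᵗ⁺ᵏ E[rₜ₊ₖ ∇ log π̃ₜ]`, each of which thus
converges uniformly in `θ`. The constants may grow faster than `γ⁻ᵗ`, so the terms are summed by
dominated convergence, which uses only that rewards and scores are bounded.
-/

open Filter Topology ProbabilityTheory

section TestFunctions

variable {X : Type*} [MeasurableSpace X]

lemma abs_integral_sub_le_of_forall_abs_sub_le {μ : Measure X} [IsProbabilityMeasure μ]
    {f g : X → ℝ} {δ : ℝ} (hf : Integrable f μ) (hg : Integrable g μ)
    (h : ∀ x, |f x - g x| ≤ δ) : |∫ x, f x ∂μ - ∫ x, g x ∂μ| ≤ δ := by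
  rw [← integral_sub hf hg]
  simpa using norm_integral_le_of_norm_le_const (μ := μ) (f := fun x => f x - g x) (ae_of_all _ h)

lemma abs_integral_sub_le_add_of_forall_abs_sub_le {μ ν : Measure X} [IsProbabilityMeasure μ]
    [IsProbabilityMeasure ν] {f g : X → ℝ} {c δ : ℝ} (hfμ : Integrable f μ) (hfν : Integrable f ν)
    (hgμ : Integrable g μ) (hgν : Integrable g ν) (h : ∀ x, |f x - (g x + c)| ≤ δ) :
    |∫ x, f x ∂μ - ∫ x, f x ∂ν| ≤ |∫ x, g x ∂μ - ∫ x, g x ∂ν| + 2 * δ := by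
  have hμ := abs_integral_sub_le_of_forall_abs_sub_le hfμ (hgμ.add (integrable_const c)) h
  have hν := abs_integral_sub_le_of_forall_abs_sub_le hfν (hgν.add (integrable_const c)) h
  simp only [Pi.add_apply, integral_add hgμ (integrable_const c),
    integral_add hgν (integrable_const c), integral_const, probReal_univ, one_smul] at hμ hν
  have hg := abs_le.mp (le_refl |∫ x, g x ∂μ - ∫ x, g x ∂ν|)
  rw [abs_le] at hμ hν ⊢
  constructor <;> linarith

lemma abs_integral_sub_le_mul_of_forall {μ ν : Measure X} [IsProbabilityMeasure μ]
    [IsProbabilityMeasure ν] {d : X → X → ℝ} {c K : ℝ}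
    (h : ∀ f : X → ℝ, (∀ x y, |f x - f y| ≤ d x y) → |∫ x, f x ∂μ - ∫ x, f x ∂ν| ≤ c)
    {f : X → ℝ} (hK : 0 ≤ K) (hf : ∀ x y, |f x - f y| ≤ K * d x y) :
    |∫ x, f x ∂μ - ∫ x, f x ∂ν| ≤ K * c := by
  rcases hK.eq_or_lt with rfl | hK
  · obtain ⟨y⟩ := nonempty_of_isProbabilityMeasure μ
    have hconst : f = fun _ => f y := funext fun x => by
      simpa [sub_eq_zero] using hf x y
    rw [hconst]
    simp
  · have hscaled := h (fun x => K⁻¹ * f x) fun x y => by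
      rw [← mul_sub, abs_mul, abs_of_pos (inv_pos.mpr hK), inv_mul_le_iff₀ hK]
      exact hf x y
    rwa [integral_const_mul, integral_const_mul, ← mul_sub, abs_mul, abs_of_pos (inv_pos.mpr hK),
      inv_mul_le_iff₀ hK] at hscaled

lemma abs_integral_sub_integral_le_mul_add {μ ν : Measure X} [IsProbabilityMeasure μ]
    [IsProbabilityMeasure ν] {d : X → X → ℝ} {c K δ : ℝ}
    (h : ∀ f : X → ℝ, (∀ x y, |f x - f y| ≤ d x y) → |∫ x, f x ∂μ - ∫ x, f x ∂ν| ≤ c)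
    {f g : X → ℝ} (hK : 0 ≤ K) (hf : ∀ x y, |f x - f y| ≤ K * d x y)
    (hfg : ∀ x, |f x - g x| ≤ δ) (hfν : Integrable f ν) (hgν : Integrable g ν) :
    |∫ x, f x ∂μ - ∫ x, g x ∂ν| ≤ K * c + δ :=
  (abs_sub_le _ _ _).trans <| add_le_add (abs_integral_sub_le_mul_of_forall h hK hf) <|
    abs_integral_sub_le_of_forall_abs_sub_le hfν hgν hfg

end TestFunctions

section Lipschitz

variable {X : Type*} [PseudoMetricSpace X]

lemma lipschitzWith_one_iff_abs_sub_le {f : X → ℝ} :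
    LipschitzWith 1 f ↔ ∀ x y, |f x - f y| ≤ dist x y := by
  simp [lipschitzWith_iff_dist_le_mul, Real.dist_eq]

variable [CompactSpace X]

lemma dist_le_diam_univ (x y : X) : dist x y ≤ Metric.diam (Set.univ : Set X) :=
  Metric.dist_le_diam_of_mem isCompact_univ.isBounded (Set.mem_univ x) (Set.mem_univ y)

lemma integrable_of_lipschitzWith [MeasurableSpace X] [OpensMeasurableSpace X] {f : X → ℝ}
    {K : NNReal} (hf : LipschitzWith K f) (μ : Measure X) [IsFiniteMeasure μ] : Integrable f μ := by
  obtain ⟨C, hC⟩ := isCompact_univ.exists_bound_of_continuousOn hf.continuous.continuousOn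
  exact Integrable.of_bound hf.continuous.aestronglyMeasurable C
    (ae_of_all _ fun x => hC x trivial)

lemma integrable_of_abs_sub_le [MeasurableSpace X] [OpensMeasurableSpace X] {f : X → ℝ} {K : ℝ}
    (hf : ∀ x y, |f x - f y| ≤ K * dist x y) (μ : Measure X) [IsFiniteMeasure μ] :
    Integrable f μ :=
  integrable_of_lipschitzWith (LipschitzWith.of_dist_le' hf) μ

lemma exists_finset_lipschitz_net (X : Type*) [PseudoMetricSpace X] [CompactSpace X] {δ : ℝ}
    (hδ : 0 < δ) : ∃ G : Finset (X → ℝ), (∀ g ∈ G, LipschitzWith 1 g) ∧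
      ∀ f : X → ℝ, LipschitzWith 1 f → ∃ g ∈ G, ∃ c, ∀ x, |f x - (g x + c)| ≤ δ := by
  rcases isEmpty_or_nonempty X with hX | ⟨⟨x₀⟩⟩
  · exact ⟨{fun _ => 0}, fun g hg => Finset.mem_singleton.mp hg ▸ LipschitzWith.const' 0,
      fun f _ => ⟨_, Finset.mem_singleton_self _, 0, fun x => hX.elim x⟩⟩
  let A : Set (BoundedContinuousFunction X ℝ) := {f | LipschitzWith 1 f ∧ f x₀ = 0}
  let D := Metric.diam (Set.univ : Set X)
  have hA : IsCompact (closure A) := by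
    refine BoundedContinuousFunction.arzela_ascoli (Set.Icc (-D) D) isCompact_Icc A ?_
      (LipschitzWith.uniformEquicontinuous _ 1 fun f => f.2.1).equicontinuous
    intro f x hf
    have hfx := lipschitzWith_one_iff_abs_sub_le.mp hf.1 x x₀
    rw [hf.2, sub_zero] at hfx
    exact abs_le.mp (hfx.trans (dist_le_diam_univ x x₀))
  obtain ⟨t, htA, ht, hcover⟩ := exists_finite_cover_balls_of_isCompact_closure hA hδ
  classical
  refine ⟨ht.toFinset.image (⇑), by simpa using fun g hg => (htA hg).1, fun f hf => ?_⟩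
  let f₀ : BoundedContinuousFunction X ℝ :=
    .mkOfCompact ⟨fun x => f x - f x₀, hf.continuous.sub continuous_const⟩
  have hf₀ : f₀ ∈ A :=
    ⟨lipschitzWith_one_iff_abs_sub_le.mpr
      (by simpa [f₀] using lipschitzWith_one_iff_abs_sub_le.mp hf), by simp [f₀]⟩
  obtain ⟨g, hgt, hg⟩ := Set.mem_iUnion₂.mp (hcover hf₀)
  refine ⟨g, Finset.mem_image_of_mem _ (ht.mem_toFinset.mpr hgt), f x₀, fun x => ?_⟩
  calc |f x - (g x + f x₀)| = dist (f₀ x) (g x) := by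
        rw [Real.dist_eq, add_comm, ← sub_sub]; rfl
    _ ≤ δ := (BoundedContinuousFunction.dist_coe_le_dist x).trans hg.le

end Lipschitz

section Wasserstein

variable {X : Type*} [PseudoMetricSpace X] [MeasurableSpace X]

lemma W1_le {μ ν : ProbabilityMeasure X} {c : ℝ} (h : ∀ f : X → ℝ, LipschitzWith 1 f →
    |∫ x, f x ∂(μ : Measure X) - ∫ x, f x ∂(ν : Measure X)| ≤ c) : W1 μ ν ≤ c := by
  have : Nonempty {f : X → ℝ // LipschitzWith 1 f} := ⟨⟨0, LipschitzWith.const' 0⟩⟩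
  exact ciSup_le fun f => h f f.2

lemma W1_nonneg (μ ν : ProbabilityMeasure X) : 0 ≤ W1 μ ν :=
  Real.iSup_nonneg fun _ => abs_nonneg _

lemma W1_self (μ : ProbabilityMeasure X) : W1 μ μ = 0 := by
  simp [W1]

lemma W1_comm (μ ν : ProbabilityMeasure X) : W1 μ ν = W1 ν μ := by
  simp only [W1, abs_sub_comm]

variable [CompactSpace X] [OpensMeasurableSpace X]

lemma abs_integral_sub_le_two_mul_diam (μ ν : ProbabilityMeasure X) {f : X → ℝ}
    (hf : LipschitzWith 1 f) :
    |∫ x, f x ∂(μ : Measure X) - ∫ x, f x ∂(ν : Measure X)| ≤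
      2 * Metric.diam (Set.univ : Set X) := by
  obtain ⟨x₀⟩ := nonempty_of_isProbabilityMeasure (μ : Measure X)
  simpa using abs_integral_sub_le_add_of_forall_abs_sub_le (g := 0) (c := f x₀)
    (integrable_of_lipschitzWith hf _) (integrable_of_lipschitzWith hf _)
    (integrable_zero _ _ _) (integrable_zero _ _ _) fun x => by
      simpa using
        (lipschitzWith_one_iff_abs_sub_le.mp hf x x₀).trans (dist_le_diam_univ x x₀)

lemma abs_integral_sub_le_W1 (μ ν : ProbabilityMeasure X) {f : X → ℝ} (hf : LipschitzWith 1 f) :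
    |∫ x, f x ∂(μ : Measure X) - ∫ x, f x ∂(ν : Measure X)| ≤ W1 μ ν :=
  le_ciSup (f := fun f : {f : X → ℝ // LipschitzWith 1 f} =>
      |∫ x, (f : X → ℝ) x ∂(μ : Measure X) - ∫ x, (f : X → ℝ) x ∂(ν : Measure X)|)
    ⟨_, Set.forall_mem_range.mpr fun f => abs_integral_sub_le_two_mul_diam μ ν f.2⟩ ⟨f, hf⟩

lemma W1_triangle (μ ν ρ : ProbabilityMeasure X) : W1 μ ρ ≤ W1 μ ν + W1 ν ρ :=
  W1_le fun _ hf => (abs_sub_le _ _ _).trans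
    (add_le_add (abs_integral_sub_le_W1 _ _ hf) (abs_integral_sub_le_W1 _ _ hf))

lemma W1_le_two_mul_diam (μ ν : ProbabilityMeasure X) :
    W1 μ ν ≤ 2 * Metric.diam (Set.univ : Set X) :=
  W1_le fun _ hf => abs_integral_sub_le_two_mul_diam μ ν hf

lemma exists_finset_W1_le (X : Type*) [PseudoMetricSpace X] [CompactSpace X] [MeasurableSpace X]
    [OpensMeasurableSpace X] {δ : ℝ} (hδ : 0 < δ) :
    ∃ G : Finset (X → ℝ), (∀ g ∈ G, LipschitzWith 1 g) ∧ ∀ μ ν : ProbabilityMeasure X,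
      W1 μ ν ≤ ∑ g ∈ G, |∫ x, g x ∂(μ : Measure X) - ∫ x, g x ∂(ν : Measure X)| + δ := by
  obtain ⟨G, hG, hnet⟩ := exists_finset_lipschitz_net X (half_pos hδ)
  refine ⟨G, hG, fun μ ν => W1_le fun f hf => ?_⟩
  obtain ⟨g, hg, c, hc⟩ := hnet f hf
  calc |∫ x, f x ∂(μ : Measure X) - ∫ x, f x ∂(ν : Measure X)|
      ≤ |∫ x, g x ∂(μ : Measure X) - ∫ x, g x ∂(ν : Measure X)| + 2 * (δ / 2) :=
        abs_integral_sub_le_add_of_forall_abs_sub_le (integrable_of_lipschitzWith hf _)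
          (integrable_of_lipschitzWith hf _) (integrable_of_lipschitzWith (hG g hg) _)
          (integrable_of_lipschitzWith (hG g hg) _) hc
    _ ≤ _ := by
        rw [mul_div_cancel₀ δ two_ne_zero]
        gcongr
        exact Finset.single_le_sum (f := fun g : X → ℝ =>
          |∫ x, g x ∂(μ : Measure X) - ∫ x, g x ∂(ν : Measure X)|)
          (fun _ _ => abs_nonneg _) hg

end Wasserstein

section QuantizedMeasurability

lemma stronglyMeasurable_of_forall_exists_code {A E : Type*} [MeasurableSpace A]
    [PseudoMetricSpace E] {F : A → E}
    (h : ∀ δ > 0, ∃ φ : A → ℕ, Measurable φ ∧ ∀ a b, φ a = φ b → dist (F a) (F b) ≤ δ) :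
    StronglyMeasurable F := by
  cases isEmpty_or_nonempty A
  · exact .of_subsingleton_dom
  have hδ (n : ℕ) : (0 : ℝ) < 1 / (n + 1) := by positivity
  choose φ hφ hFφ using fun n => h _ (hδ n)
  refine stronglyMeasurable_of_tendsto atTop
    (f := fun n a => F (Function.invFun (φ n) (φ n a)))
    (fun n => (StronglyMeasurable.of_discrete
      (f := fun k => F (Function.invFun (φ n) k))).comp_measurable (hφ n)) ?_
  refine tendsto_pi_nhds.mpr fun a => tendsto_iff_dist_tendsto_zero.mpr <|
    squeeze_zero (fun _ => dist_nonneg) (fun n => ?_) tendsto_one_div_add_atTop_nhds_zero_nat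
  exact hFφ n _ _ (Function.invFun_eq ⟨a, rfl⟩)

lemma stronglyMeasurable_integral_of_measurable {A Y E : Type*} [MeasurableSpace A]
    [MeasurableSpace Y] [NormedAddCommGroup E] [NormedSpace ℝ E] {κ : A → Measure Y}
    (hκ : Measurable κ) {f : Y → E} (hf : StronglyMeasurable f) :
    StronglyMeasurable fun a => ∫ y, f y ∂(κ a) :=
  hf.integral_kernel (κ := ⟨κ, hκ⟩)

variable {X : Type*} [PseudoMetricSpace X] [CompactSpace X] [MeasurableSpace X]
  [OpensMeasurableSpace X]

lemma exists_measurable_code_W1_le (X : Type*) [PseudoMetricSpace X] [CompactSpace X]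
    [MeasurableSpace X] [OpensMeasurableSpace X] {δ : ℝ} (hδ : 0 < δ) :
    ∃ φ : ProbabilityMeasure X → ℕ, Measurable φ ∧ ∀ μ ν, φ μ = φ ν → W1 μ ν ≤ δ := by
  obtain ⟨G, hG, hW1⟩ := exists_finset_W1_le X (half_pos hδ)
  let η := δ / (2 * (G.card + 1))
  have hη : 0 < η := by positivity
  let φ (μ : ProbabilityMeasure X) (g : G) : ℤ := ⌊η⁻¹ * ∫ x, (g : X → ℝ) x ∂(μ : Measure X)⌋
  have hφ : Measurable φ := measurable_pi_lambda _ fun g =>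
    Int.measurable_floor.comp <| ((stronglyMeasurable_integral_of_measurable measurable_subtype_coe
      (hG g g.2).continuous.stronglyMeasurable).measurable.const_mul _)
  obtain ⟨e, he⟩ := Countable.exists_injective_nat (G → ℤ)
  refine ⟨e ∘ φ, Measurable.of_discrete.comp hφ, fun μ ν hμν => (hW1 μ ν).trans ?_⟩
  have hclose : ∀ g ∈ G,
      |∫ x, g x ∂(μ : Measure X) - ∫ x, g x ∂(ν : Measure X)| ≤ η := fun g hg => by
    have hfloor := Int.abs_sub_lt_one_of_floor_eq_floor (congrFun (he hμν) ⟨g, hg⟩)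
    rw [← mul_sub, abs_mul, abs_of_pos (inv_pos.mpr hη), inv_mul_lt_iff₀ hη, mul_one] at hfloor
    exact hfloor.le
  calc ∑ g ∈ G, |∫ x, g x ∂(μ : Measure X) - ∫ x, g x ∂(ν : Measure X)| + δ / 2
      ≤ ∑ _g ∈ G, η + δ / 2 := by gcongr with g hg; exact hclose g hg
    _ ≤ (G.card + 1) * η + δ / 2 := by
        rw [Finset.sum_const, nsmul_eq_mul]
        gcongr
        linarith
    _ = δ := by simp only [η]; field_simp; ring

lemma stronglyMeasurable_of_dist_le_mul_W1 {E : Type*} [PseudoMetricSpace E] {K : ℝ}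
    {F : ProbabilityMeasure X → E} (hF : ∀ μ ν, dist (F μ) (F ν) ≤ K * W1 μ ν) :
    StronglyMeasurable F := by
  refine stronglyMeasurable_of_forall_exists_code fun δ hδ => ?_
  obtain ⟨φ, hφ, hW1⟩ := exists_measurable_code_W1_le X (δ := δ / (|K| + 1)) (by positivity)
  refine ⟨φ, hφ, fun μ ν hμν => (hF μ ν).trans ?_⟩
  calc K * W1 μ ν ≤ (|K| + 1) * (δ / (|K| + 1)) :=
        mul_le_mul (by linarith [le_abs_self K]) (hW1 μ ν hμν) (W1_nonneg _ _) (by positivity)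
    _ = δ := by field_simp

lemma stronglyMeasurable_of_dist_le_mul_dist_add_W1 {E Z : Type*} [PseudoMetricSpace E]
    [MetricSpace Z] [SecondCountableTopology Z] [MeasurableSpace Z] [OpensMeasurableSpace Z] {K : ℝ}
    {F : Z × ProbabilityMeasure X → E}
    (hF : ∀ z z' μ ν, dist (F (z, μ)) (F (z', ν)) ≤ K * (dist z z' + W1 μ ν)) :
    StronglyMeasurable F :=
  stronglyMeasurable_uncurry_of_continuous_of_stronglyMeasurable (u := fun z μ => F (z, μ))
    (fun μ => (LipschitzWith.of_dist_le' fun z z' => by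
      simpa [W1_self] using hF z z' μ μ).continuous)
    (fun z => stronglyMeasurable_of_dist_le_mul_W1 (K := K) fun μ ν => by simpa using hF z z μ ν)

lemma measurable_W1_left (ρ : ProbabilityMeasure X) :
    Measurable fun μ : ProbabilityMeasure X => W1 μ ρ :=
  (stronglyMeasurable_of_dist_le_mul_W1 (K := 1) fun μ ν => by
    rw [Real.dist_eq, abs_le, one_mul]
    constructor <;>
      linarith [W1_triangle ν μ ρ, W1_triangle μ ν ρ, W1_comm μ ν]).measurable

end QuantizedMeasurability

section MeasureFamilies

variable {A B C : Type*} [MeasurableSpace A] [MeasurableSpace B] [MeasurableSpace C]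

lemma measurable_of_forall_lipschitz_measurable_integral {Y : Type*} [PseudoEMetricSpace Y]
    [MeasurableSpace Y] [BorelSpace Y] {κ : A → ProbabilityMeasure Y}
    (h : ∀ (f : Y → ℝ) (K : NNReal), LipschitzWith K f →
      Measurable fun a => ∫ y, f y ∂(κ a : Measure Y)) : Measurable κ := by
  suffices Measurable fun a => (κ a : Measure Y) from this.subtype_mk
  refine Measurable.measure_of_isPiSystem_of_isProbabilityMeasure (S := {s | IsClosed s})
    (by rw [BorelSpace.measurable_eq (α := Y), borel_eq_generateFrom_isClosed])
    isPiSystem_isClosed fun s hs => ?_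
  have hreal : Measurable fun a => (κ a : Measure Y).real s :=
    measurable_of_tendsto_metrizable
      (fun n : ℕ => h _ _ (lipschitzWith_thickenedIndicator (δ := 1 / ((n : ℝ) + 1))
        (by positivity) s))
      (tendsto_pi_nhds.mpr fun a => tendsto_integral_thickenedIndicator_of_isClosed _ hs
        (δs := fun n : ℕ => 1 / ((n : ℝ) + 1)) (fun _ => by positivity)
        tendsto_one_div_add_atTop_nhds_zero_nat)
  simpa using hreal.ennreal_ofReal

lemma measurable_of_abs_integral_sub_le {X Y Z : Type*} [PseudoMetricSpace X] [CompactSpace X]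
    [MeasurableSpace X] [OpensMeasurableSpace X] [PseudoMetricSpace Y] [MeasurableSpace Y]
    [BorelSpace Y] [MetricSpace Z] [SecondCountableTopology Z] [MeasurableSpace Z]
    [OpensMeasurableSpace Z] {M : ℝ} {κ : Z × ProbabilityMeasure X → ProbabilityMeasure Y}
    (h : ∀ z z' μ μ' (f : Y → ℝ), LipschitzWith 1 f →
      |∫ y, f y ∂(κ (z, μ) : Measure Y) - ∫ y, f y ∂(κ (z', μ') : Measure Y)| ≤
        M * (dist z z' + W1 μ μ')) : Measurable κ := by
  refine measurable_of_forall_lipschitz_measurable_integral fun f K hf => ?_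
  refine (stronglyMeasurable_of_dist_le_mul_dist_add_W1 (K := K * M) fun z z' μ ν => ?_).measurable
  rw [Real.dist_eq, mul_assoc]
  exact abs_integral_sub_le_mul_of_forall (d := dist)
    (fun f hf => h z z' μ ν f (lipschitzWith_one_iff_abs_sub_le.mpr hf)) K.2
    fun x y => by simpa [Real.dist_eq] using hf.dist_le_mul x y

lemma measurable_measure_bind {κ : A → ProbabilityMeasure B} (hκ : Measurable κ)
    {η : A → B → Measure C} (hη : Measurable (Function.uncurry η)) :
    Measurable fun a => (κ a : Measure B).bind (η a) := by
  let K : Kernel A B := ⟨fun a => κ a, measurable_subtype_coe.comp hκ⟩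
  have : IsMarkovKernel K := ⟨fun a => (κ a).2⟩
  refine Measure.measurable_of_measurable_coe _ fun s hs => ?_
  simp_rw [Measure.bind_apply hs (hη.of_uncurry_left).aemeasurable]
  exact Measurable.lintegral_kernel_prod_right' (κ := K) ((Measure.measurable_coe hs).comp hη)

lemma measurable_measure_map {κ : A → ProbabilityMeasure B} (hκ : Measurable κ) {g : A → B → C}
    (hg : Measurable (Function.uncurry g)) : Measurable fun a => (κ a : Measure B).map (g a) := by
  simpa only [Measure.bind_dirac_eq_map _ hg.of_uncurry_left] using
    measurable_measure_bind hκ (η := fun a b => Measure.dirac (g a b))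
      (Measure.measurable_dirac.comp hg)

lemma measurable_measure_pi {ι : Type*} [Fintype ι] {ν : A → ι → Measure B}
    [∀ a i, IsProbabilityMeasure (ν a i)] (hν : ∀ i, Measurable fun a => ν a i) :
    Measurable fun a => Measure.pi (ν a) := by
  refine Measurable.measure_of_isPiSystem_of_isProbabilityMeasure generateFrom_pi.symm
    isPiSystem_pi ?_
  rintro _ ⟨s, hs, rfl⟩
  simp only [Measure.pi_pi]
  exact Finset.measurable_prod _ fun i _ => (Measure.measurable_coe (hs i trivial)).comp (hν i)

lemma integral_measure_bind {E : Type*} [NormedAddCommGroup E] [NormedSpace ℝ E] {m : Measure A}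
    {κ : A → Measure B} (hκ : Measurable κ) {f : B → E} (hf : Integrable f (m.bind κ)) :
    ∫ b, f b ∂(m.bind κ) = ∫ a, ∫ b, f b ∂(κ a) ∂m := by
  let K : Kernel A B := ⟨κ, hκ⟩
  have hcomp : m.bind κ = (K ∘ₖ Kernel.const Unit m) () :=
    Measure.comp_eq_comp_const_apply (κ := K) (μ := m)
  rw [hcomp] at hf ⊢
  rw [Kernel.integral_comp hf, Kernel.const_apply]
  rfl

lemma integrable_integral_of_integrable_bind {E : Type*} [NormedAddCommGroup E] [NormedSpace ℝ E]
    {m : Measure A} {κ : A → Measure B} (hκ : Measurable κ) {f : B → E}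
    (hf : Integrable f (m.bind κ)) : Integrable (fun a => ∫ b, f b ∂(κ a)) m := by
  let K : Kernel A B := ⟨κ, hκ⟩
  have hcomp : m.bind κ = (K ∘ₖ Kernel.const Unit m) () :=
    Measure.comp_eq_comp_const_apply (κ := K) (μ := m)
  rw [hcomp] at hf
  exact hf.integral_comp

end MeasureFamilies

section EmpiricalMeasures

variable {X : Type*} [MeasurableSpace X]

lemma integral_inv_smul_sum_measure {N : ℕ} (ν : Fin N → Measure X) {f : X → ℝ}
    (hf : ∀ i, Integrable f (ν i)) :
    ∫ x, f x ∂((N : ENNReal)⁻¹ • ∑ i, ν i) = (N : ℝ)⁻¹ * ∑ i, ∫ x, f x ∂(ν i) := by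
  rw [integral_smul_measure, integral_finsetSum_measure fun i _ => hf i]
  simp

variable [Nonempty X]

lemma coe_emp {N : ℕ} (hN : N ≠ 0) (x : Fin N → X) :
    (emp N x : Measure X) = (N : ENNReal)⁻¹ • ∑ i, Measure.dirac (x i) :=
  congrArg Subtype.val (dif_neg hN)

lemma integral_emp {N : ℕ} (hN : N ≠ 0) (x : Fin N → X) {f : X → ℝ} (hf : StronglyMeasurable f) :
    ∫ y, f y ∂(emp N x : Measure X) = (N : ℝ)⁻¹ * ∑ i, f (x i) := by
  rw [coe_emp hN, integral_inv_smul_sum_measure _ fun i => integrable_dirac' hf (by simp)]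
  simp only [integral_dirac' f _ hf]

lemma measurable_emp (N : ℕ) : Measurable (emp N : (Fin N → X) → ProbabilityMeasure X) := by
  suffices Measurable fun x : Fin N → X => (emp N x : Measure X) from this.subtype_mk
  rcases eq_or_ne N 0 with rfl | hN
  · exact measurable_const' fun x y => by rw [Subsingleton.elim x y]
  simp_rw [coe_emp hN]
  refine Measure.measurable_of_measurable_coe _ fun s hs => ?_
  simp only [Measure.smul_apply, Measure.coe_finsetSum, Finset.sum_apply, smul_eq_mul]
  exact .const_mul (Finset.measurable_sum _ fun i _ =>
    (Measure.measurable_coe hs).comp (Measure.measurable_dirac.comp (measurable_pi_apply i))) _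

end EmpiricalMeasures

section LawOfLargeNumbers

variable {X : Type*} [PseudoMetricSpace X] [CompactSpace X] [MeasurableSpace X]
  [OpensMeasurableSpace X]

lemma memLp_of_lipschitzWith {g : X → ℝ} (hg : LipschitzWith 1 g) (μ : Measure X)
    [IsFiniteMeasure μ] (q : ENNReal) : MemLp g q μ := by
  obtain ⟨C, hC⟩ := isCompact_univ.exists_bound_of_continuousOn hg.continuous.continuousOn
  exact .of_bound hg.continuous.aestronglyMeasurable C (ae_of_all _ fun x => hC x trivial)

lemma variance_le_sq_diam {g : X → ℝ} (hg : LipschitzWith 1 g) (μ : Measure X)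
    [IsProbabilityMeasure μ] : Var[g; μ] ≤ Metric.diam (Set.univ : Set X) ^ 2 := by
  obtain ⟨x₀⟩ := nonempty_of_isProbabilityMeasure μ
  set D := Metric.diam (Set.univ : Set X)
  have hrange (x : X) : g x ∈ Set.Icc (g x₀ - D) (g x₀ + D) := by
    have := abs_le.mp <|
      (lipschitzWith_one_iff_abs_sub_le.mp hg x x₀).trans (dist_le_diam_univ x x₀)
    constructor <;> linarith
  calc Var[g; μ] ≤ ((g x₀ + D - (g x₀ - D)) / 2) ^ 2 :=
        variance_le_sq_of_bounded (ae_of_all _ hrange) hg.continuous.aemeasurable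
    _ = D ^ 2 := by ring

lemma integral_abs_sub_mean_le_sqrt_variance {Ω : Type*} [MeasurableSpace Ω] {P : Measure Ω}
    [IsProbabilityMeasure P] {S : Ω → ℝ} (hS : MemLp S 2 P) :
    ∫ ω, |S ω - ∫ ω', S ω' ∂P| ∂P ≤ √(Var[S; P]) := by
  have hcentered : MemLp (fun ω => |S ω - ∫ ω', S ω' ∂P|) 2 P := (hS.sub (memLp_const _)).abs
  refine Real.le_sqrt_of_sq_le ?_
  have hvar := variance_nonneg (fun ω => |S ω - ∫ ω', S ω' ∂P|) P
  rw [variance_eq_sub hcentered] at hvar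
  rw [variance_eq_integral hS.aestronglyMeasurable.aemeasurable]
  simpa [sq_abs] using hvar

lemma integral_abs_integral_emp_sub_le [Nonempty X] {N : ℕ} (hN : N ≠ 0) {g : X → ℝ}
    (hg : LipschitzWith 1 g) (ν : Fin N → Measure X) [∀ i, IsProbabilityMeasure (ν i)]
    {ρ : Measure X} (hρ : ρ = (N : ENNReal)⁻¹ • ∑ i, ν i) :
    ∫ y, |∫ x, g x ∂(emp N y : Measure X) - ∫ x, g x ∂ρ| ∂(Measure.pi ν) ≤
      Metric.diam (Set.univ : Set X) / √N := by
  set D := Metric.diam (Set.univ : Set X)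
  let S : (Fin N → X) → ℝ := ∑ i, fun y => g (y i)
  have hS : MemLp S 2 (Measure.pi ν) := memLp_finsetSum' _ fun i _ =>
    (memLp_of_lipschitzWith hg (ν i) 2).comp_measurePreserving (measurePreserving_eval ν i)
  have hmean : ∫ y, S y ∂(Measure.pi ν) = ∑ i, ∫ x, g x ∂(ν i) := by
    have hint (i : Fin N) : Integrable (fun y : Fin N → X => g (y i)) (Measure.pi ν) :=
      (measurePreserving_eval ν i).integrable_comp_of_integrable (integrable_of_lipschitzWith hg _)
    simp only [S, Finset.sum_apply]
    rw [integral_finsetSum _ fun i _ => hint i]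
    exact Finset.sum_congr rfl fun i _ => integral_comp_eval hg.continuous.aestronglyMeasurable
  have hvar : Var[S; Measure.pi ν] ≤ N * D ^ 2 := by
    rw [variance_sum_pi fun i => memLp_of_lipschitzWith hg (ν i) 2]
    simpa using Finset.sum_le_sum fun i (_ : i ∈ Finset.univ) => variance_le_sq_diam hg (ν i)
  have hcentered (y : Fin N → X) : ∫ x, g x ∂(emp N y : Measure X) - ∫ x, g x ∂ρ =
      (N : ℝ)⁻¹ * (S y - ∫ y, S y ∂(Measure.pi ν)) := by
    rw [integral_emp hN y hg.continuous.stronglyMeasurable, hρ, integral_inv_smul_sum_measure ν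
      fun i => integrable_of_lipschitzWith hg (ν i), hmean, mul_sub]
    simp [S]
  calc ∫ y, |∫ x, g x ∂(emp N y : Measure X) - ∫ x, g x ∂ρ| ∂(Measure.pi ν)
      = (N : ℝ)⁻¹ * ∫ y, |S y - ∫ y, S y ∂(Measure.pi ν)| ∂(Measure.pi ν) := by
        simp_rw [hcentered, abs_mul, integral_const_mul, abs_inv, Nat.abs_cast]
    _ ≤ (N : ℝ)⁻¹ * √(N * D ^ 2) := by
        gcongr
        exact (integral_abs_sub_mean_le_sqrt_variance hS).trans (Real.sqrt_le_sqrt hvar)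
    _ = D / √N := by
        rw [Real.sqrt_mul N.cast_nonneg, Real.sqrt_sq Metric.diam_nonneg]
        field_simp
        rw [Real.sq_sqrt N.cast_nonneg]

lemma integrable_W1_emp [Nonempty X] {N : ℕ} (ρ : ProbabilityMeasure X)
    (P : Measure (Fin N → X)) [IsFiniteMeasure P] : Integrable (fun y => W1 (emp N y) ρ) P :=
  .of_bound ((measurable_W1_left ρ).comp (measurable_emp N)).aestronglyMeasurable
    (2 * Metric.diam (Set.univ : Set X)) <| ae_of_all _ fun y => by
      rw [Real.norm_eq_abs, abs_of_nonneg (W1_nonneg _ _)]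
      exact W1_le_two_mul_diam _ _

/-- The worst expected `W₁`-distance between the empirical measure of `N` independent points, of
possibly different laws, and the average of their laws. The supremum runs over the pairs of a family
of laws and its average, so that it is over the empty set, hence `0`, when `N = 0`. -/
noncomputable def empDeviation (X : Type*) [PseudoMetricSpace X] [MeasurableSpace X] [Nonempty X]
    (N : ℕ) : ℝ :=
  ⨆ q : {q : (Fin N → ProbabilityMeasure X) × ProbabilityMeasure X //
      (q.2 : Measure X) = (N : ENNReal)⁻¹ • ∑ i, (q.1 i : Measure X)},
    ∫ y, W1 (emp N y) q.1.2 ∂(Measure.pi fun i => (q.1.1 i : Measure X))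

lemma empDeviation_nonneg (X : Type*) [PseudoMetricSpace X] [MeasurableSpace X] [Nonempty X]
    (N : ℕ) : 0 ≤ empDeviation X N :=
  Real.iSup_nonneg fun _ => integral_nonneg fun _ => W1_nonneg _ _

variable [Nonempty X]

lemma integral_W1_emp_le_empDeviation {N : ℕ} (ν : Fin N → Measure X)
    [hν : ∀ i, IsProbabilityMeasure (ν i)] {ρ : ProbabilityMeasure X}
    (hρ : (ρ : Measure X) = (N : ENNReal)⁻¹ • ∑ i, ν i) :
    ∫ y, W1 (emp N y) ρ ∂(Measure.pi ν) ≤ empDeviation X N := by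
  refine le_ciSup (f := fun q : {q : (Fin N → ProbabilityMeasure X) × ProbabilityMeasure X //
      (q.2 : Measure X) = (N : ENNReal)⁻¹ • ∑ i, (q.1 i : Measure X)} =>
    ∫ y, W1 (emp N y) q.1.2 ∂(Measure.pi fun i => (q.1.1 i : Measure X)))
    ⟨2 * Metric.diam (Set.univ : Set X), Set.forall_mem_range.mpr fun q => ?_⟩
    ⟨(fun i => ⟨ν i, hν i⟩, ρ), hρ⟩
  simpa using integral_mono (integrable_W1_emp q.1.2 (Measure.pi fun i => (q.1.1 i : Measure X)))
    (integrable_const _) fun y => W1_le_two_mul_diam (emp N y) q.1.2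

lemma integral_W1_emp_pi_const_le_empDeviation {N : ℕ} (hN : N ≠ 0) (μ : ProbabilityMeasure X) :
    ∫ y, W1 (emp N y) μ ∂(Measure.pi fun _ => (μ : Measure X)) ≤ empDeviation X N := by
  refine integral_W1_emp_le_empDeviation _ ?_
  rw [Finset.sum_const, Finset.card_univ, Fintype.card_fin, ← Nat.cast_smul_eq_nsmul ENNReal,
    smul_smul, ENNReal.inv_mul_cancel (by exact_mod_cast hN) (by simp), one_smul]

lemma exists_empDeviation_le (X : Type*) [PseudoMetricSpace X] [CompactSpace X] [MeasurableSpace X]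
    [OpensMeasurableSpace X] [Nonempty X] {δ : ℝ} (hδ : 0 < δ) :
    ∃ k : ℕ, ∀ N ≠ 0, empDeviation X N ≤ k * (Metric.diam (Set.univ : Set X) / √N) + δ := by
  obtain ⟨G, hG, hW1⟩ := exists_finset_W1_le X hδ
  refine ⟨G.card, fun N hN => Real.iSup_le (fun ⟨⟨ν, ρ⟩, hρ⟩ => ?_)
    (by have := Metric.diam_nonneg (s := (Set.univ : Set X)); positivity)⟩
  have hint : ∀ g ∈ G, Integrable (fun y : Fin N → X =>
      |∫ x, g x ∂(emp N y : Measure X) - ∫ x, g x ∂(ρ : Measure X)|)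
      (Measure.pi fun i => (ν i : Measure X)) := fun g hg => by
    refine .of_bound ?_ (2 * Metric.diam (Set.univ : Set X)) (ae_of_all _ fun y => by
      simpa using abs_integral_sub_le_two_mul_diam (emp N y) ρ (hG g hg))
    exact (((stronglyMeasurable_integral_of_measurable
      (measurable_subtype_coe.comp (measurable_emp N))
      (hG g hg).continuous.stronglyMeasurable).measurable.sub_const _).abs).aestronglyMeasurable
  calc ∫ y, W1 (emp N y) ρ ∂(Measure.pi fun i => (ν i : Measure X))
      ≤ ∫ y, (∑ g ∈ G, |∫ x, g x ∂(emp N y : Measure X) - ∫ x, g x ∂(ρ : Measure X)| + δ)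
          ∂(Measure.pi fun i => (ν i : Measure X)) :=
        integral_mono (integrable_W1_emp ρ _)
          ((integrable_finsetSum _ hint).add (integrable_const _)) fun y => hW1 _ _
    _ = ∑ g ∈ G, ∫ y, |∫ x, g x ∂(emp N y : Measure X) - ∫ x, g x ∂(ρ : Measure X)|
          ∂(Measure.pi fun i => (ν i : Measure X)) + δ := by
        rw [integral_add (integrable_finsetSum _ hint) (integrable_const _),
          integral_finsetSum _ hint]
        simp
    _ ≤ ∑ _g ∈ G, Metric.diam (Set.univ : Set X) / √N + δ := by
        gcongr with g hg
        exact integral_abs_integral_emp_sub_le hN (hG g hg) _ hρ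
    _ = _ := by rw [Finset.sum_const, nsmul_eq_mul]

lemma tendsto_empDeviation (X : Type*) [PseudoMetricSpace X] [CompactSpace X] [MeasurableSpace X]
    [OpensMeasurableSpace X] [Nonempty X] : Tendsto (empDeviation X) atTop (𝓝 0) := by
  refine tendsto_order.mpr ⟨fun c hc => .of_forall fun N => hc.trans_le (empDeviation_nonneg X N),
    fun c hc => ?_⟩
  obtain ⟨k, hk⟩ := exists_empDeviation_le X (half_pos hc)
  have hvanish : Tendsto (fun N : ℕ => k * (Metric.diam (Set.univ : Set X) / √N)) atTop (𝓝 0) := by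
    simpa using ((tendsto_const_nhds (x := Metric.diam (Set.univ : Set X))).div_atTop
      (Real.tendsto_sqrt_atTop.comp tendsto_natCast_atTop_atTop)).const_mul (k : ℝ)
  filter_upwards [hvanish.eventually_lt_const (half_pos hc), eventually_ne_atTop 0] with N hN hN0
  linarith [hk N hN0]

end LawOfLargeNumbers

section StateSpace

/-- State-action pairs `(x⁰, (u⁰, ξ), μ)` of the limiting process. -/
abbrev MFState (X X0 U0 Xi : Type*) [MeasurableSpace X] : Type _ :=
  X0 × (U0 × Xi) × ProbabilityMeasure X

/-- State-action pairs `(x⁰, (u⁰, ξ), (xⁱ)ᵢ)` of the `N`-agent system. -/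
abbrev AgentState (X X0 U0 Xi : Type*) (N : ℕ) : Type _ :=
  X0 × (U0 × Xi) × (Fin N → X)

variable {X X0 U0 Xi E : Type*} [MeasurableSpace X]

/-- The state-action pair of the limiting process seen by the major agent of the `N`-agent system,
obtained by replacing the minor agents by their empirical measure. -/
noncomputable def empState [Nonempty X] {N : ℕ} (s : AgentState X X0 U0 Xi N) :
    MFState X X0 U0 Xi :=
  (s.1, s.2.1, emp N s.2.2)

lemma measurable_empState [Nonempty X] [MeasurableSpace X0] [MeasurableSpace U0]
    [MeasurableSpace Xi] {N : ℕ} :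
    Measurable (empState : AgentState X X0 U0 Xi N → MFState X X0 U0 Xi) :=
  measurable_fst.prodMk <|
    measurable_snd.fst.prodMk <| (measurable_emp N).comp measurable_snd.snd

variable [MetricSpace X] [MetricSpace X0] [MetricSpace U0] [MetricSpace Xi]

/-- The sum of the distances of the components, with `W₁` as the distance of the mean fields. -/
noncomputable def stateDist (s s' : MFState X X0 U0 Xi) : ℝ :=
  dist s.1 s'.1 + dist s.2.1.1 s'.2.1.1 + dist s.2.1.2 s'.2.1.2 + W1 s.2.2 s'.2.2

/-- Lipschitz continuity with constant `L` for `stateDist`. `LipschitzWith` does not apply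
because `ProbabilityMeasure X` carries no metric. -/
def StateLipschitz [NormedAddCommGroup E] (L : ℝ) (F : MFState X X0 U0 Xi → E) : Prop :=
  ∀ s s', ‖F s - F s'‖ ≤ L * stateDist s s'

lemma stateDist_nonneg (s s' : MFState X X0 U0 Xi) : 0 ≤ stateDist s s' := by
  have := W1_nonneg s.2.2 s'.2.2
  unfold stateDist
  positivity

namespace StateLipschitz

variable {L : ℝ} [NormedAddCommGroup E] {F : MFState X X0 U0 Xi → E}

lemma mono {L' : ℝ} (hF : StateLipschitz L F) (hL : L ≤ L') : StateLipschitz L' F :=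
  fun s s' => (hF s s').trans <| mul_le_mul_of_nonneg_right hL (stateDist_nonneg s s')

lemma smul [NormedSpace ℝ E] {g : MFState X X0 U0 Xi → ℝ} {Lg Cg C : ℝ}
    (hg : StateLipschitz Lg g) (hgC : ∀ s, |g s| ≤ Cg) (hF : StateLipschitz L F)
    (hFC : ∀ s, ‖F s‖ ≤ C) : StateLipschitz (Cg * L + C * Lg) fun s => g s • F s := fun s s' => by
  calc ‖g s • F s - g s' • F s'‖ = ‖g s • (F s - F s') + (g s - g s') • F s'‖ := by
        congr 1; module
    _ ≤ |g s| * ‖F s - F s'‖ + ‖g s - g s'‖ * ‖F s'‖ :=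
        (norm_add_le _ _).trans_eq <| by simp only [norm_smul, Real.norm_eq_abs]
    _ ≤ Cg * (L * stateDist s s') + Lg * stateDist s s' * C := by
        gcongr
        · exact (abs_nonneg _).trans (hgC s)
        · exact hgC s
        · exact hF s s'
        · exact (norm_nonneg _).trans (hg s s')
        · exact hg s s'
        · exact hFC s'
    _ = (Cg * L + C * Lg) * stateDist s s' := by ring

lemma clm_comp {G : Type*} [NormedSpace ℝ E] [NormedAddCommGroup G] [NormedSpace ℝ G]
    (hF : StateLipschitz L F) (φ : E →L[ℝ] G) : StateLipschitz (‖φ‖ * L) fun s => φ (F s) :=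
  fun s s' => by
    rw [← map_sub, mul_assoc]
    exact (φ.le_opNorm _).trans <| mul_le_mul_of_nonneg_left (hF s s') (norm_nonneg φ)

variable [CompactSpace X] [BorelSpace X] [CompactSpace X0] [CompactSpace U0] [CompactSpace Xi]

lemma exists_norm_le (hF : StateLipschitz L F) : ∃ C, ∀ s, ‖F s‖ ≤ C := by
  rcases isEmpty_or_nonempty (MFState X X0 U0 Xi) with _ | ⟨⟨s₀⟩⟩
  · exact ⟨0, isEmptyElim⟩
  let D : ℝ := Metric.diam (Set.univ : Set X0) + Metric.diam (Set.univ : Set U0) +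
    Metric.diam (Set.univ : Set Xi) + 2 * Metric.diam (Set.univ : Set X)
  have hD (s : MFState X X0 U0 Xi) : stateDist s s₀ ≤ D :=
    add_le_add (add_le_add (add_le_add (dist_le_diam_univ _ _) (dist_le_diam_univ _ _))
      (dist_le_diam_univ _ _)) (W1_le_two_mul_diam _ _)
  refine ⟨|L| * D + ‖F s₀‖, fun s => ?_⟩
  calc ‖F s‖ ≤ ‖F s - F s₀‖ + ‖F s₀‖ := by simpa using norm_add_le (F s - F s₀) (F s₀)
    _ ≤ |L| * D + ‖F s₀‖ := by
        gcongr
        exact (hF.mono (le_abs_self L) s s₀).trans <|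
          mul_le_mul_of_nonneg_left (hD s) (abs_nonneg L)

variable [MeasurableSpace X0] [BorelSpace X0] [MeasurableSpace U0] [BorelSpace U0]
  [MeasurableSpace Xi] [BorelSpace Xi]

lemma stronglyMeasurable (hF : StateLipschitz L F) : StronglyMeasurable F := by
  let assoc (s : MFState X X0 U0 Xi) : (X0 × U0 × Xi) × ProbabilityMeasure X :=
    ((s.1, s.2.1), s.2.2)
  have hassoc : Measurable assoc := by fun_prop
  refine StronglyMeasurable.comp_measurable (f := fun q : (X0 × U0 × Xi) × ProbabilityMeasure X =>
    F (q.1.1, q.1.2, q.2)) ?_ hassoc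
  refine stronglyMeasurable_of_dist_le_mul_dist_add_W1 (K := |L| * 3) fun z z' μ ν => ?_
  have hmajor : dist z.1 z'.1 ≤ dist z z' := le_max_left _ _
  have haction : dist z.2 z'.2 ≤ dist z z' := le_max_right _ _
  have hu : dist z.2.1 z'.2.1 ≤ dist z.2 z'.2 := le_max_left _ _
  have hξ : dist z.2.2 z'.2.2 ≤ dist z.2 z'.2 := le_max_right _ _
  rw [dist_eq_norm, mul_assoc]
  refine (hF.mono (le_abs_self L) _ _).trans (mul_le_mul_of_nonneg_left ?_ (abs_nonneg L))
  simp only [stateDist]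
  linarith [W1_nonneg μ ν]

lemma integrable_comp {A : Type*} [MeasurableSpace A] {e : A → MFState X X0 U0 Xi}
    (hF : StateLipschitz L F) (he : Measurable e) (P : Measure A) [IsFiniteMeasure P] :
    Integrable (fun a => F (e a)) P := by
  obtain ⟨C, hC⟩ := hF.exists_norm_le
  exact .of_bound (hF.stronglyMeasurable.comp_measurable he).aestronglyMeasurable C
    (ae_of_all _ fun a => hC _)

lemma integrable (hF : StateLipschitz L F) (P : Measure (MFState X X0 U0 Xi))
    [IsFiniteMeasure P] : Integrable F P :=
  hF.integrable_comp measurable_id P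

end StateLipschitz

end StateSpace

section MarkovChain

section ChainLaw

variable {A : Type*} [MeasurableSpace A]

/-- The law at time `t` of the Markov chain with transition kernel `κ` and initial law `ι`. -/
noncomputable def chainLaw (κ : Kernel A A) (ι : Measure A) : ℕ → Measure A
  | 0 => ι
  | t + 1 => (chainLaw κ ι t).bind κ

instance (κ : Kernel A A) [IsMarkovKernel κ] (ι : Measure A) [IsProbabilityMeasure ι] (t : ℕ) :
    IsProbabilityMeasure (chainLaw κ ι t) := by
  induction t with
  | zero => assumption
  | succ t _ => exact isProbabilityMeasure_bind κ.aemeasurable (ae_of_all _ inferInstance)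

lemma measurable_chainLaw {B : Type*} [MeasurableSpace B] (κ : Kernel A A) {ι : B → Measure A}
    (hι : Measurable ι) (t : ℕ) : Measurable fun b => chainLaw κ (ι b) t := by
  induction t with
  | zero => exact hι
  | succ t ih => exact (Measure.measurable_bind' κ.measurable).comp ih

end ChainLaw

variable {A X X0 U0 Xi : Type*} [MeasurableSpace A]
  [MetricSpace X] [MeasurableSpace X] [MetricSpace X0] [MeasurableSpace X0]
  [MetricSpace U0] [MeasurableSpace U0] [MetricSpace Xi] [MeasurableSpace Xi]

/-- A transition kernel of the limiting process is `C`-Lipschitz if integration against it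
multiplies Lipschitz constants by at most `C`. -/
def LipschitzKernel (C : ℝ) (κ : Kernel (MFState X X0 U0 Xi) (MFState X X0 U0 Xi)) : Prop :=
  ∀ L : ℝ, 0 ≤ L → ∀ f : MFState X X0 U0 Xi → ℝ, StateLipschitz L f →
    StateLipschitz (C * L) fun s => ∫ s', f s' ∂(κ s)

/-- `P`, seen through the observable `e`, is `η`-close to `P'` when tested against Lipschitz
functions. -/
def LipClose (e : A → MFState X X0 U0 Xi) (P : Measure A) (P' : Measure (MFState X X0 U0 Xi))
    (η : ℝ) : Prop :=
  ∀ L : ℝ, 0 ≤ L → ∀ f : MFState X X0 U0 Xi → ℝ, StateLipschitz L f →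
    |∫ a, f (e a) ∂P - ∫ s, f s ∂P'| ≤ L * η

lemma LipClose.mono {e : A → MFState X X0 U0 Xi} {P : Measure A}
    {P' : Measure (MFState X X0 U0 Xi)} {η η' : ℝ} (h : LipClose e P P' η) (hη : η ≤ η') :
    LipClose e P P' η' :=
  fun L hL f hf => (h L hL f hf).trans (mul_le_mul_of_nonneg_left hη hL)

variable [CompactSpace X] [BorelSpace X] [CompactSpace X0] [BorelSpace X0]
  [CompactSpace U0] [BorelSpace U0] [CompactSpace Xi] [BorelSpace Xi]

lemma LipschitzKernel.integral_chainLaw_dirac {C L : ℝ}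
    {κ : Kernel (MFState X X0 U0 Xi) (MFState X X0 U0 Xi)} [IsMarkovKernel κ]
    (hκ : LipschitzKernel C κ) (hC : 0 ≤ C) (hL : 0 ≤ L) {f : MFState X X0 U0 Xi → ℝ}
    (hf : StateLipschitz L f) (t : ℕ) :
    StateLipschitz (C ^ t * L) fun s => ∫ s', f s' ∂(chainLaw κ (Measure.dirac s) t) := by
  induction t generalizing L f with
  | zero =>
    simpa only [chainLaw, integral_dirac' _ _ hf.stronglyMeasurable, pow_zero, one_mul] using hf
  | succ t ih =>
    simp only [chainLaw, integral_measure_bind κ.measurable (hf.integrable _), pow_succ, mul_assoc]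
    exact ih (mul_nonneg hC hL) (hκ L hL f hf)

namespace LipClose

variable {e : A → MFState X X0 U0 Xi} {P : Measure A} {P' : Measure (MFState X X0 U0 Xi)} {η : ℝ}

lemma norm_integral_sub_le {E : Type*} [NormedAddCommGroup E] [NormedSpace ℝ E] [CompleteSpace E]
    [IsFiniteMeasure P] [IsFiniteMeasure P'] (h : LipClose e P P' η) (he : Measurable e)
    (hη : 0 ≤ η) {L : ℝ} (hL : 0 ≤ L) {F : MFState X X0 U0 Xi → E} (hF : StateLipschitz L F) :
    ‖∫ a, F (e a) ∂P - ∫ s, F s ∂P'‖ ≤ L * η := by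
  refine NormedSpace.norm_le_dual_bound ℝ _ (by positivity) fun φ => ?_
  rw [map_sub, ← φ.integral_comp_comm (hF.integrable_comp he P),
    ← φ.integral_comp_comm (hF.integrable P')]
  exact (h _ (by positivity) _ (hF.clm_comp φ)).trans_eq (by ring)

variable {κ : Kernel A A} {κ' : Kernel (MFState X X0 U0 Xi) (MFState X X0 U0 Xi)}
  [IsMarkovKernel κ] [IsMarkovKernel κ'] [IsProbabilityMeasure P] [IsProbabilityMeasure P']
  {C ε : ℝ}

lemma bind (h : LipClose e P P' η) (he : Measurable e) (hC : 0 ≤ C) (hκ' : LipschitzKernel C κ')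
    (hε : ∀ a, LipClose e (κ a) (κ' (e a)) ε) :
    LipClose e (P.bind κ) (P'.bind κ') (C * η + ε) := fun L hL f hf => by
  have hfe := hf.integrable_comp he (P.bind κ)
  rw [integral_measure_bind κ.measurable hfe,
    integral_measure_bind κ'.measurable (hf.integrable _)]
  let g (s : MFState X X0 U0 Xi) : ℝ := ∫ s', f s' ∂(κ' s)
  have hg : StateLipschitz (C * L) g := hκ' L hL f hf
  have hkernel : |∫ a, ∫ b, f (e b) ∂(κ a) ∂P - ∫ a, g (e a) ∂P| ≤ L * ε :=
    abs_integral_sub_le_of_forall_abs_sub_le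
      (integrable_integral_of_integrable_bind κ.measurable hfe)
      (hg.integrable_comp he P) fun a => hε a L hL f hf
  have hlaw : |∫ a, g (e a) ∂P - ∫ s, g s ∂P'| ≤ C * L * η := h _ (by positivity) _ hg
  calc _ ≤ L * ε + C * L * η := (abs_sub_le _ _ _).trans (add_le_add hkernel hlaw)
    _ = L * (C * η + ε) := by ring

protected lemma chainLaw (h : LipClose e P P' η) (he : Measurable e) (hC : 0 ≤ C)
    (hκ' : LipschitzKernel C κ') (hε : ∀ a, LipClose e (κ a) (κ' (e a)) ε) (t : ℕ) :
    LipClose e (chainLaw κ P t) (chainLaw κ' P' t)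
      (C ^ t * η + (∑ i ∈ Finset.range t, C ^ i) * ε) := by
  induction t with
  | zero => simpa [chainLaw] using h
  | succ t ih =>
    have hconst : C ^ (t + 1) * η + (∑ i ∈ Finset.range (t + 1), C ^ i) * ε =
        C * (C ^ t * η + (∑ i ∈ Finset.range t, C ^ i) * ε) + ε := by
      rw [geom_sum_succ]
      ring
    rw [hconst]
    exact ih.bind he hC hκ' hε

end LipClose

end MarkovChain

lemma tendstoUniformly_iff_tendsto_sub {I Z E : Type*} [NormedAddCommGroup E] {l : Filter I}
    {F : I → Z → E} {f : Z → E} :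
    TendstoUniformly F f l ↔ Tendsto (fun q : I × Z => F q.1 q.2 - f q.2) (l ×ˢ ⊤) (𝓝 0) := by
  rw [tendstoUniformly_iff_tendsto, uniformity_eq_comap_nhds_zero, tendsto_comap_iff]
  rfl

section DiscountedSeries

variable {E : Type*} [NormedAddCommGroup E] [NormedSpace ℝ E] {γ B : ℝ}

lemma norm_pow_smul_le {u : ℕ → E} (hu : ∀ t, ‖u t‖ ≤ B) (t : ℕ) :
    ‖γ ^ t • u t‖ ≤ |γ| ^ t * B := by
  rw [norm_smul, norm_pow, Real.norm_eq_abs]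
  exact mul_le_mul_of_nonneg_left (hu t) (by positivity)

lemma summable_abs_pow_mul (hγ : |γ| < 1) : Summable fun t : ℕ => |γ| ^ t * B :=
  (summable_geometric_of_lt_one (abs_nonneg γ) hγ).mul_right B

lemma norm_tsum_pow_smul_le (hγ : |γ| < 1) {u : ℕ → E} (hu : ∀ t, ‖u t‖ ≤ B) :
    ‖∑' t, γ ^ t • u t‖ ≤ (1 - |γ|)⁻¹ * B :=
  tsum_of_norm_bounded ((hasSum_geometric_of_lt_one (abs_nonneg γ) hγ).mul_right B)
    (norm_pow_smul_le hu)

variable [CompleteSpace E]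

lemma summable_pow_smul (hγ : |γ| < 1) {u : ℕ → E} (hu : ∀ t, ‖u t‖ ≤ B) :
    Summable fun t => γ ^ t • u t :=
  (summable_abs_pow_mul hγ).of_norm_bounded (norm_pow_smul_le hu)

lemma tendstoUniformly_tsum_pow_smul (hγ : |γ| < 1) {I Z : Type*} {l : Filter I}
    {u : I → Z → ℕ → E} {v : Z → ℕ → E} (hu : ∀ i z t, ‖u i z t‖ ≤ B) (hv : ∀ z t, ‖v z t‖ ≤ B)
    (h : ∀ t, TendstoUniformly (fun i z => u i z t) (fun z => v z t) l) :
    TendstoUniformly (fun i z => ∑' t, γ ^ t • u i z t) (fun z => ∑' t, γ ^ t • v z t) l := by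
  have hbound (q : I × Z) (t : ℕ) : ‖u q.1 q.2 t - v q.2 t‖ ≤ B + B :=
    (norm_sub_le _ _).trans (add_le_add (hu q.1 q.2 t) (hv q.2 t))
  have hterm (t : ℕ) :
      Tendsto (fun q : I × Z => γ ^ t • (u q.1 q.2 t - v q.2 t)) (l ×ˢ ⊤) (𝓝 0) := by
    simpa using (tendstoUniformly_iff_tendsto_sub.mp (h t)).const_smul (γ ^ t)
  have hsub (q : I × Z) : ∑' t, γ ^ t • (u q.1 q.2 t - v q.2 t) =
      ∑' t, γ ^ t • u q.1 q.2 t - ∑' t, γ ^ t • v q.2 t := by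
    simp only [smul_sub]
    exact (summable_pow_smul hγ (hu q.1 q.2)).tsum_sub (summable_pow_smul hγ (hv q.2))
  rw [tendstoUniformly_iff_tendsto_sub]
  simpa [hsub] using tendsto_tsum_of_dominated_convergence (summable_abs_pow_mul hγ) hterm
    (Eventually.of_forall fun q => norm_pow_smul_le (hbound q))

end DiscountedSeries

section PolicyGradient

variable {A E : Type*} [MeasurableSpace A] [NormedAddCommGroup E] [NormedSpace ℝ E]

/-- The mean reward after `k` steps of the chain with kernel `κ`, started from the restart law
`ι a`: the `k`-th term of the action-value function at the state-action pair `a`. -/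
noncomputable def expectedReward (κ : Kernel A A) (ι : A → Measure A) (f : A → ℝ) (k : ℕ) (a : A) :
    ℝ :=
  ∫ b, f b ∂(chainLaw κ (ι a) k)

/-- The contribution to the policy gradient, up to discounting, of the score `v` at time `t` and
the reward `k` steps later. -/
noncomputable def gradientTerm (κ : Kernel A A) (ι : A → Measure A) (f : A → ℝ) (v : A → E)
    (P : Measure A) (t k : ℕ) : E :=
  ∫ a, expectedReward κ ι f k a • v a ∂(chainLaw κ P t)

/-- The policy gradient `∑ γᵗ E[Q v]` along the chain with kernel `κ` and initial law `P`, where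
`Q a` is the expected discounted sum of the rewards `f` from the restart law `ι a`. -/
noncomputable def policyGradient (γ : ℝ) (κ : Kernel A A) (ι : A → Measure A) (f : A → ℝ)
    (v : A → E) (P : Measure A) : E :=
  ∑' t : ℕ, γ ^ t • ∫ a, (∑' k : ℕ, γ ^ k * expectedReward κ ι f k a) • v a ∂(chainLaw κ P t)

variable {κ : Kernel A A} {ι : A → Measure A} {f : A → ℝ}

lemma stronglyMeasurable_expectedReward (hι : Measurable ι) (hf : StronglyMeasurable f) (k : ℕ) :
    StronglyMeasurable (expectedReward κ ι f k) :=
  stronglyMeasurable_integral_of_measurable (measurable_chainLaw κ hι k) hf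

variable [IsMarkovKernel κ] {R C : ℝ}

lemma norm_integral_chainLaw_le {F : A → E} (hF : ∀ a, ‖F a‖ ≤ R) (P : Measure A)
    [IsProbabilityMeasure P] (t : ℕ) : ‖∫ a, F a ∂(chainLaw κ P t)‖ ≤ R := by
  simpa using norm_integral_le_of_norm_le_const (μ := chainLaw κ P t) (ae_of_all _ hF)

variable [∀ a, IsProbabilityMeasure (ι a)] {v : A → E}

lemma abs_expectedReward_le (hf : ∀ a, |f a| ≤ R) (k : ℕ) (a : A) :
    |expectedReward κ ι f k a| ≤ R :=
  norm_integral_chainLaw_le (F := f) hf (ι a) k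

lemma norm_expectedReward_smul_le (hf : ∀ a, |f a| ≤ R) (hv : ∀ a, ‖v a‖ ≤ C) (k : ℕ) (a : A) :
    ‖expectedReward κ ι f k a • v a‖ ≤ R * C := by
  have hQ : |expectedReward κ ι f k a| ≤ R := abs_expectedReward_le hf k a
  rw [norm_smul]
  exact mul_le_mul hQ (hv a) (norm_nonneg _) ((abs_nonneg _).trans hQ)

lemma integrable_expectedReward_smul (hι : Measurable ι) (hfm : StronglyMeasurable f)
    (hf : ∀ a, |f a| ≤ R) (hvm : StronglyMeasurable v) (hv : ∀ a, ‖v a‖ ≤ C) (P : Measure A)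
    [IsFiniteMeasure P] (k : ℕ) : Integrable (fun a => expectedReward κ ι f k a • v a) P :=
  .of_bound ((stronglyMeasurable_expectedReward hι hfm k).smul hvm).aestronglyMeasurable (R * C)
    (ae_of_all _ (norm_expectedReward_smul_le hf hv k))

lemma norm_gradientTerm_le (hf : ∀ a, |f a| ≤ R) (hv : ∀ a, ‖v a‖ ≤ C) (P : Measure A)
    [IsProbabilityMeasure P] (t k : ℕ) : ‖gradientTerm κ ι f v P t k‖ ≤ R * C :=
  norm_integral_chainLaw_le (norm_expectedReward_smul_le hf hv k) P t

lemma policyGradient_eq_tsum_tsum_gradientTerm {γ : ℝ} (hγ : |γ| < 1) (hι : Measurable ι)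
    (hfm : StronglyMeasurable f) (hf : ∀ a, |f a| ≤ R) (hvm : StronglyMeasurable v)
    (hv : ∀ a, ‖v a‖ ≤ C) (P : Measure A) [IsProbabilityMeasure P] :
    policyGradient γ κ ι f v P =
      ∑' t : ℕ, γ ^ t • ∑' k : ℕ, γ ^ k • gradientTerm κ ι f v P t k := by
  refine tsum_congr fun t => congrArg (γ ^ t • ·) ?_
  let F (k : ℕ) (a : A) : E := γ ^ k • expectedReward κ ι f k a • v a
  have hFint (k : ℕ) : Integrable (F k) (chainLaw κ P t) :=
    (integrable_expectedReward_smul hι hfm hf hvm hv _ k).smul (γ ^ k)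
  have hFbound (k : ℕ) (a : A) : ‖F k a‖ ≤ |γ| ^ k * (R * C) :=
    norm_pow_smul_le (fun k => norm_expectedReward_smul_le hf hv k a) k
  have hFsum : Summable fun k => ∫ a, ‖F k a‖ ∂(chainLaw κ P t) :=
    (summable_abs_pow_mul hγ).of_nonneg_of_le (fun k => integral_nonneg fun a => norm_nonneg _)
      fun k => (Real.le_norm_self _).trans <|
        norm_integral_chainLaw_le (fun a => by simpa using hFbound k a) P t
  have hQsum (a : A) : Summable fun k : ℕ => γ ^ k * expectedReward κ ι f k a :=
    summable_pow_smul hγ fun k => abs_expectedReward_le hf k a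
  calc ∫ a, (∑' k : ℕ, γ ^ k * expectedReward κ ι f k a) • v a ∂(chainLaw κ P t)
      = ∫ a, ∑' k, F k a ∂(chainLaw κ P t) := by
        simp only [F, ← (hQsum _).tsum_smul_const, mul_smul]
    _ = ∑' k, ∫ a, F k a ∂(chainLaw κ P t) :=
        (integral_tsum_of_summable_integral_norm hFint hFsum).symm
    _ = ∑' k, γ ^ k • gradientTerm κ ι f v P t k := by
        simp only [F, integral_smul, gradientTerm]

end PolicyGradient

section IidLaw

variable {X X0 U0 Xi : Type*} [MeasurableSpace X] [MeasurableSpace X0] [MeasurableSpace U0]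
  [MeasurableSpace Xi]

/-- The law of the `N`-agent state-action pair with major agent state and joint action as in `s`
and i.i.d. minor agents distributed as the mean field of `s`. The `N`-agent action-value function
at `s` starts from this law. -/
noncomputable def iidLaw (N : ℕ) (s : MFState X X0 U0 Xi) : Measure (AgentState X X0 U0 Xi N) :=
  (Measure.pi fun _ : Fin N => (s.2.2 : Measure X)).map fun x => (s.1, s.2.1, x)

instance (N : ℕ) (s : MFState X X0 U0 Xi) : IsProbabilityMeasure (iidLaw N s) :=
  Measure.isProbabilityMeasure_map (by fun_prop)

lemma measurable_iidLaw (N : ℕ) :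
    Measurable (iidLaw N : MFState X X0 U0 Xi → Measure (AgentState X X0 U0 Xi N)) := by
  let n (s : MFState X X0 U0 Xi) : ProbabilityMeasure (Fin N → X) :=
    ⟨Measure.pi fun _ => (s.2.2 : Measure X), inferInstance⟩
  have hn : Measurable n := (measurable_measure_pi
    (ν := fun (s : MFState X X0 U0 Xi) (_ : Fin N) => (s.2.2 : Measure X)) fun _ =>
      measurable_subtype_coe.comp measurable_snd.snd).subtype_mk
  exact measurable_measure_map hn
    (g := fun (s : MFState X X0 U0 Xi) (x : Fin N → X) => (s.1, s.2.1, x)) (by fun_prop)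

end IidLaw

lemma lipClose_iidLaw {X X0 U0 Xi : Type*}
    [MetricSpace X] [CompactSpace X] [MeasurableSpace X] [BorelSpace X] [Nonempty X]
    [MetricSpace X0] [CompactSpace X0] [MeasurableSpace X0] [BorelSpace X0]
    [MetricSpace U0] [CompactSpace U0] [MeasurableSpace U0] [BorelSpace U0]
    [MetricSpace Xi] [CompactSpace Xi] [MeasurableSpace Xi] [BorelSpace Xi]
    {N : ℕ} (hN : N ≠ 0) (s : MFState X X0 U0 Xi) :
    LipClose empState (iidLaw N s) (Measure.dirac s) (empDeviation X N) := by
  intro L hL f hf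
  let e (x : Fin N → X) : MFState X X0 U0 Xi := (s.1, s.2.1, emp N x)
  let n : Measure (Fin N → X) := Measure.pi fun _ => (s.2.2 : Measure X)
  have he : Measurable e :=
    measurable_const.prodMk (measurable_const.prodMk (measurable_emp N))
  have hmap : ∫ z, f (empState z) ∂(iidLaw N s) = ∫ x, f (e x) ∂n :=
    integral_map (by fun_prop)
      (hf.stronglyMeasurable.comp_measurable measurable_empState).aestronglyMeasurable
  have hdirac : ∫ z, f z ∂(Measure.dirac s) = ∫ _, f s ∂n := by
    simp [integral_dirac' _ _ hf.stronglyMeasurable, n]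
  rw [hmap, hdirac, ← integral_sub (hf.integrable_comp he n) (integrable_const _)]
  calc ‖∫ x, f (e x) - f s ∂n‖ ≤ ∫ x, L * W1 (emp N x) s.2.2 ∂n :=
        norm_integral_le_of_norm_le ((integrable_W1_emp _ _).const_mul _) <|
          ae_of_all _ fun x => by simpa [e, stateDist] using hf (e x) s
    _ ≤ L * empDeviation X N := by
        rw [integral_const_mul]
        exact mul_le_mul_of_nonneg_left (integral_W1_emp_pi_const_le_empDeviation hN s.2.2) hL

section Model

variable {X U X0 U0 Xi : Type*}

section Transitions

variable [MeasurableSpace X] [MeasurableSpace U]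

/-- The law of the next state of a minor agent in state `x` when the system is in the
state-action pair `s`. -/
noncomputable def agentLaw (p : X → U → X0 → U0 → ProbabilityMeasure X → ProbabilityMeasure X)
    (Γ : Xi → X → ProbabilityMeasure U) (s : MFState X X0 U0 Xi) (x : X) : Measure X :=
  (Γ s.2.1.2 x : Measure U).bind fun u => (p x u s.1 s.2.1.1 s.2.2 : Measure X)

/-- The deterministic mean field transition `TG`, as a function of the state-action pair. -/
def nextMeanField (TG : X0 → U0 → Xi → ProbabilityMeasure X → ProbabilityMeasure X)
    (s : MFState X X0 U0 Xi) : ProbabilityMeasure X :=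
  TG s.1 s.2.1.1 s.2.1.2 s.2.2

/-- The law of the state-action pair obtained from the state `y` by sampling the joint action from
the policy `pt`, which sees the minor agents only through their mean field `e y.2`. Taking
`e = emp N` or `e = id` gives the `N`-agent system or the limiting process. -/
noncomputable def policyLaw {Y : Type*} [MeasurableSpace Y] [MeasurableSpace X0]
    [MeasurableSpace U0] [MeasurableSpace Xi]
    (pt : X0 → ProbabilityMeasure X → ProbabilityMeasure (U0 × Xi)) (e : Y → ProbabilityMeasure X)
    (y : X0 × Y) : Measure (X0 × (U0 × Xi) × Y) :=
  (pt y.1 (e y.2) : Measure (U0 × Xi)).map fun a => (y.1, a, y.2)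

/-- The mean of `f` over the joint action sampled from the policy `pt`. -/
noncomputable def policyMean [MeasurableSpace U0] [MeasurableSpace Xi]
    (pt : X0 → ProbabilityMeasure X → ProbabilityMeasure (U0 × Xi))
    (f : MFState X X0 U0 Xi → ℝ) (y : X0 × ProbabilityMeasure X) : ℝ :=
  ∫ a, f (y.1, a, y.2) ∂(pt y.1 y.2 : Measure (U0 × Xi))

instance {Y : Type*} [MeasurableSpace Y] [MeasurableSpace X0] [MeasurableSpace U0]
    [MeasurableSpace Xi] (pt : X0 → ProbabilityMeasure X → ProbabilityMeasure (U0 × Xi))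
    (e : Y → ProbabilityMeasure X) (y : X0 × Y) : IsProbabilityMeasure (policyLaw pt e y) :=
  Measure.isProbabilityMeasure_map (by fun_prop)

end Transitions

variable [MetricSpace X] [MeasurableSpace X] [MetricSpace U] [MeasurableSpace U]
  [MetricSpace X0] [MeasurableSpace X0] [MetricSpace U0] [MeasurableSpace U0]
  [MetricSpace Xi] [MeasurableSpace Xi]

/-- The data of an M3FC problem with a fixed policy `pt` is Lipschitz, with a common constant
`1 ≤ M`, and `TG` is the mean field transition that it induces. The joint actions carry the sum
distance. -/
structure LipschitzM3FC (M : ℝ)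
    (p : X → U → X0 → U0 → ProbabilityMeasure X → ProbabilityMeasure X)
    (p0 : X0 → U0 → ProbabilityMeasure X → ProbabilityMeasure X0)
    (Γ : Xi → X → ProbabilityMeasure U)
    (pt : X0 → ProbabilityMeasure X → ProbabilityMeasure (U0 × Xi))
    (TG : X0 → U0 → Xi → ProbabilityMeasure X → ProbabilityMeasure X) : Prop where
  one_le : 1 ≤ M
  agent : ∀ (x x' : X) (u u' : U) (x0 x0' : X0) (u0 u0' : U0) (μ μ' : ProbabilityMeasure X)
      (f : X → ℝ), LipschitzWith 1 f →
    |∫ y, f y ∂(p x u x0 u0 μ : Measure X) - ∫ y, f y ∂(p x' u' x0' u0' μ' : Measure X)|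
      ≤ M * (dist x x' + dist u u' + dist x0 x0' + dist u0 u0' + W1 μ μ')
  major : ∀ (x0 x0' : X0) (u0 u0' : U0) (μ μ' : ProbabilityMeasure X) (f : X0 → ℝ),
      LipschitzWith 1 f →
    |∫ y, f y ∂(p0 x0 u0 μ : Measure X0) - ∫ y, f y ∂(p0 x0' u0' μ' : Measure X0)|
      ≤ M * (dist x0 x0' + dist u0 u0' + W1 μ μ')
  rule : ∀ (ξ ξ' : Xi) (x x' : X) (g : U → ℝ), LipschitzWith 1 g →
    |∫ u, g u ∂(Γ ξ x : Measure U) - ∫ u, g u ∂(Γ ξ' x' : Measure U)|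
      ≤ M * (dist ξ ξ' + dist x x')
  policy : ∀ (x0 x0' : X0) (μ μ' : ProbabilityMeasure X) (g : U0 × Xi → ℝ),
      (∀ a b : U0 × Xi, |g a - g b| ≤ dist a.1 b.1 + dist a.2 b.2) →
    |∫ a, g a ∂(pt x0 μ : Measure (U0 × Xi)) - ∫ a, g a ∂(pt x0' μ' : Measure (U0 × Xi))|
      ≤ M * (dist x0 x0' + W1 μ μ')
  meanField : ∀ s : MFState X X0 U0 Xi,
    (nextMeanField TG s : Measure X) = (s.2.2 : Measure X).bind (agentLaw p Γ s)

namespace LipschitzM3FC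

variable {M : ℝ} {p : X → U → X0 → U0 → ProbabilityMeasure X → ProbabilityMeasure X}
  {p0 : X0 → U0 → ProbabilityMeasure X → ProbabilityMeasure X0}
  {Γ : Xi → X → ProbabilityMeasure U}
  {pt : X0 → ProbabilityMeasure X → ProbabilityMeasure (U0 × Xi)}
  {TG : X0 → U0 → Xi → ProbabilityMeasure X → ProbabilityMeasure X}

lemma nonneg (h : LipschitzM3FC M p p0 Γ pt TG) : 0 ≤ M := zero_le_one.trans h.one_le

lemma of_separate_constants {Lp Lp0 LPi LΓ Lpt : ℝ}
    (hp : ∀ (x x' : X) (u u' : U) (x0 x0' : X0) (u0 u0' : U0) (μ μ' : ProbabilityMeasure X)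
        (f : X → ℝ), LipschitzWith 1 f →
      |∫ y, f y ∂(p x u x0 u0 μ : Measure X) - ∫ y, f y ∂(p x' u' x0' u0' μ' : Measure X)|
        ≤ Lp * (dist x x' + dist u u' + dist x0 x0' + dist u0 u0' + W1 μ μ'))
    (hp0 : ∀ (x0 x0' : X0) (u0 u0' : U0) (μ μ' : ProbabilityMeasure X) (f : X0 → ℝ),
        LipschitzWith 1 f →
      |∫ y, f y ∂(p0 x0 u0 μ : Measure X0) - ∫ y, f y ∂(p0 x0' u0' μ' : Measure X0)|
        ≤ Lp0 * (dist x0 x0' + dist u0 u0' + W1 μ μ'))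
    (hΓrule : ∀ (ξ : Xi) (x x' : X) (g : U → ℝ), LipschitzWith 1 g →
      |∫ u, g u ∂(Γ ξ x : Measure U) - ∫ u, g u ∂(Γ ξ x' : Measure U)| ≤ LPi * dist x x')
    (hΓ : ∀ (ξ ξ' : Xi) (x : X) (g : U → ℝ), LipschitzWith 1 g →
      |∫ u, g u ∂(Γ ξ x : Measure U) - ∫ u, g u ∂(Γ ξ' x : Measure U)| ≤ LΓ * dist ξ ξ')
    (hpt : ∀ (x0 x0' : X0) (μ μ' : ProbabilityMeasure X) (g : U0 × Xi → ℝ),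
        (∀ a b : U0 × Xi, |g a - g b| ≤ dist a.1 b.1 + dist a.2 b.2) →
      |∫ a, g a ∂(pt x0 μ : Measure (U0 × Xi)) - ∫ a, g a ∂(pt x0' μ' : Measure (U0 × Xi))|
        ≤ Lpt * (dist x0 x0' + W1 μ μ'))
    (hTG : ∀ (x0 : X0) (u0 : U0) (ξ : Xi) (μ : ProbabilityMeasure X),
      (TG x0 u0 ξ μ : Measure X) = (μ : Measure X).bind fun x =>
        (Γ ξ x : Measure U).bind fun u => (p x u x0 u0 μ : Measure X)) :
    LipschitzM3FC (1 + |Lp| + |Lp0| + |LPi| + |LΓ| + |Lpt|) p p0 Γ pt TG where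
  one_le := by
    have : 0 ≤ |Lp| + |Lp0| + |LPi| + |LΓ| + |Lpt| := by positivity
    linarith
  agent x x' u u' x0 x0' u0 u0' μ μ' f hf := by
    have hW1 := W1_nonneg μ μ'
    refine (hp x x' u u' x0 x0' u0 u0' μ μ' f hf).trans ?_
    gcongr
    linarith [le_abs_self Lp, abs_nonneg Lp0, abs_nonneg LPi, abs_nonneg LΓ, abs_nonneg Lpt]
  major x0 x0' u0 u0' μ μ' f hf := by
    have hW1 := W1_nonneg μ μ'
    refine (hp0 x0 x0' u0 u0' μ μ' f hf).trans ?_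
    gcongr
    linarith [abs_nonneg Lp, le_abs_self Lp0, abs_nonneg LPi, abs_nonneg LΓ, abs_nonneg Lpt]
  rule ξ ξ' x x' g hg := by
    refine (abs_sub_le _ _ _).trans <| (add_le_add (hΓ ξ ξ' x g hg) (hΓrule ξ' x x' g hg)).trans ?_
    rw [mul_add]
    gcongr <;>
    linarith [abs_nonneg Lp, abs_nonneg Lp0, le_abs_self LPi, le_abs_self LΓ, abs_nonneg LPi,
      abs_nonneg LΓ, abs_nonneg Lpt]
  policy x0 x0' μ μ' g hg := by
    have hW1 := W1_nonneg μ μ'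
    refine (hpt x0 x0' μ μ' g hg).trans ?_
    gcongr
    linarith [abs_nonneg Lp, abs_nonneg Lp0, abs_nonneg LPi, abs_nonneg LΓ, le_abs_self Lpt]
  meanField _ := hTG _ _ _ _

variable [CompactSpace X] [BorelSpace X]

lemma measurable_rule [BorelSpace U] [BorelSpace Xi] (h : LipschitzM3FC M p p0 Γ pt TG) :
    Measurable fun q : Xi × X => Γ q.1 q.2 := by
  refine measurable_of_forall_lipschitz_measurable_integral fun f K hf =>
    (LipschitzWith.of_dist_le' (K := K * (M * 2)) fun z z' => ?_).continuous.measurable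
  have hξ : dist z.1 z'.1 ≤ dist z z' := le_max_left _ _
  have hx : dist z.2 z'.2 ≤ dist z z' := le_max_right _ _
  calc |∫ u, f u ∂(Γ z.1 z.2 : Measure U) - ∫ u, f u ∂(Γ z'.1 z'.2 : Measure U)|
      ≤ K * (M * (dist z.1 z'.1 + dist z.2 z'.2)) :=
        abs_integral_sub_le_mul_of_forall (d := dist)
          (fun g hg => h.rule _ _ _ _ g (lipschitzWith_one_iff_abs_sub_le.mpr hg)) K.2
          fun x y => by simpa [Real.dist_eq] using hf.dist_le_mul x y
    _ ≤ K * (M * (2 * dist z z')) := by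
        gcongr
        · exact h.nonneg
        · linarith
    _ = K * (M * 2) * dist z z' := by ring

variable [CompactSpace X0] [BorelSpace X0]

lemma measurable_policy [BorelSpace U0] [CompactSpace Xi] [BorelSpace Xi]
    (h : LipschitzM3FC M p p0 Γ pt TG) :
    Measurable fun q : X0 × ProbabilityMeasure X => pt q.1 q.2 := by
  refine measurable_of_abs_integral_sub_le (M := M) fun z z' μ μ' f hf =>
    h.policy _ _ _ _ f fun a b => (lipschitzWith_one_iff_abs_sub_le.mp hf a b).trans ?_
  rw [Prod.dist_eq]
  exact max_le_add_of_nonneg dist_nonneg dist_nonneg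

lemma measurable_policyLaw [BorelSpace U0] [CompactSpace Xi] [BorelSpace Xi]
    (h : LipschitzM3FC M p p0 Γ pt TG) {Y : Type*} [MeasurableSpace Y]
    {e : Y → ProbabilityMeasure X} (he : Measurable e) :
    Measurable (policyLaw pt e : X0 × Y → Measure (X0 × (U0 × Xi) × Y)) :=
  measurable_measure_map
    (h.measurable_policy.comp (measurable_fst.prodMk (he.comp measurable_snd)))
    (g := fun (y : X0 × Y) (a : U0 × Xi) => (y.1, a, y.2)) (by fun_prop)

lemma isProbabilityMeasure_pi_bind_policyLaw [Nonempty X] [BorelSpace U0] [CompactSpace Xi]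
    [BorelSpace Xi] (h : LipschitzM3FC M p p0 Γ pt TG) (N : ℕ) (μ : ProbabilityMeasure X)
    (x0 : X0) :
    IsProbabilityMeasure
      ((Measure.pi fun _ : Fin N => (μ : Measure X)).bind fun x => policyLaw pt (emp N) (x0, x)) :=
  isProbabilityMeasure_bind
    ((h.measurable_policyLaw (measurable_emp N)).comp measurable_prodMk_left).aemeasurable
    (ae_of_all _ inferInstance)

variable [CompactSpace U0] [BorelSpace U0]

lemma integral_policyLaw [CompactSpace Xi] [BorelSpace Xi] {Y : Type*} [MeasurableSpace Y]
    {e : Y → ProbabilityMeasure X} (he : Measurable e) {L : ℝ} {f : MFState X X0 U0 Xi → ℝ}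
    (hf : StateLipschitz L f) (y : X0 × Y) :
    ∫ z, f (z.1, z.2.1, e z.2.2) ∂(policyLaw pt e y) = policyMean pt f (y.1, e y.2) := by
  have hfe : StronglyMeasurable fun z : X0 × (U0 × Xi) × Y => f (z.1, z.2.1, e z.2.2) :=
    hf.stronglyMeasurable.comp_measurable (by fun_prop)
  exact integral_map (by fun_prop) hfe.aestronglyMeasurable

lemma abs_policyMean_sub_le [CompactSpace Xi] [BorelSpace Xi] (h : LipschitzM3FC M p p0 Γ pt TG)
    {L : ℝ} (hL : 0 ≤ L) {f : MFState X X0 U0 Xi → ℝ} (hf : StateLipschitz L f)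
    (y y' : X0 × ProbabilityMeasure X) :
    |policyMean pt f y - policyMean pt f y'| ≤
      2 * M * L * (dist y.1 y'.1 + W1 y.2 y'.2) := by
  have hd : 0 ≤ L * (dist y.1 y'.1 + W1 y.2 y'.2) :=
    mul_nonneg hL (add_nonneg dist_nonneg (W1_nonneg _ _))
  have hslice (y : X0 × ProbabilityMeasure X) (a b : U0 × Xi) :
      |f (y.1, a, y.2) - f (y.1, b, y.2)| ≤ L * (dist a.1 b.1 + dist a.2 b.2) := by
    simpa [stateDist, W1_self] using hf (y.1, a, y.2) (y.1, b, y.2)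
  have hint (y : X0 × ProbabilityMeasure X) :
      Integrable (fun a => f (y.1, a, y.2)) (pt y'.1 y'.2 : Measure (U0 × Xi)) :=
    hf.integrable_comp (by fun_prop) _
  calc |policyMean pt f y - policyMean pt f y'|
      ≤ L * (M * (dist y.1 y'.1 + W1 y.2 y'.2)) + L * (dist y.1 y'.1 + W1 y.2 y'.2) :=
        abs_integral_sub_integral_le_mul_add (h.policy y.1 y'.1 y.2 y'.2) hL (hslice y)
          (fun a => by simpa [stateDist] using hf (y.1, a, y.2) (y'.1, a, y'.2)) (hint y) (hint y')
    _ ≤ 2 * M * L * (dist y.1 y'.1 + W1 y.2 y'.2) := by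
        linarith [mul_le_mul_of_nonneg_right h.one_le hd]

section BindPolicyLaw

variable [CompactSpace Xi] [BorelSpace Xi] {A Y : Type*} [MeasurableSpace A] [MeasurableSpace Y]
  {L : ℝ} {f : MFState X X0 U0 Xi → ℝ}

lemma integral_bind_policyLaw (h : LipschitzM3FC M p p0 Γ pt TG) {e : Y → ProbabilityMeasure X}
    (he : Measurable e) (hf : StateLipschitz L f) {g : A → X0 × Y} (hg : Measurable g)
    (m : Measure A) [IsProbabilityMeasure m] :
    ∫ z, f (z.1, z.2.1, e z.2.2) ∂(m.bind fun a => policyLaw pt e (g a)) =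
      ∫ a, policyMean pt f ((g a).1, e (g a).2) ∂m := by
  have hκ : Measurable fun a => policyLaw pt e (g a) := (h.measurable_policyLaw he).comp hg
  have := isProbabilityMeasure_bind (m := m) hκ.aemeasurable (ae_of_all _ inferInstance)
  rw [integral_measure_bind hκ (hf.integrable_comp (by fun_prop) _)]
  simp only [integral_policyLaw he hf]

lemma integrable_policyMean_comp (h : LipschitzM3FC M p p0 Γ pt TG) (hf : StateLipschitz L f)
    {w : A → X0 × ProbabilityMeasure X} (hw : Measurable w) (m : Measure A)
    [IsProbabilityMeasure m] : Integrable (fun a => policyMean pt f (w a)) m := by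
  have hκ : Measurable fun a => policyLaw pt id (w a) :=
    (h.measurable_policyLaw measurable_id).comp hw
  have := isProbabilityMeasure_bind (m := m) hκ.aemeasurable (ae_of_all _ inferInstance)
  refine (integrable_integral_of_integrable_bind hκ (hf.integrable _)).congr <| ae_of_all _ fun a =>
    ?_
  exact integral_policyLaw measurable_id hf (w a)

lemma lipClose_bind_policyLaw [Nonempty X] (h : LipschitzM3FC M p p0 Γ pt TG) {N : ℕ}
    (m : Measure X0) [IsProbabilityMeasure m] (n : Measure (Fin N → X)) [IsProbabilityMeasure n]
    {μ : ProbabilityMeasure X} {ε : ℝ} (hε : ∫ x, W1 (emp N x) μ ∂n ≤ ε) :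
    LipClose empState ((m.prod n).bind (policyLaw pt (emp N)))
      (m.bind fun y0 => policyLaw pt id (y0, μ)) (2 * M * ε) := by
  intro L hL f hf
  have hM := h.nonneg
  have hintN : Integrable (fun y : X0 × (Fin N → X) => policyMean pt f (y.1, emp N y.2))
      (m.prod n) :=
    h.integrable_policyMean_comp hf
      (measurable_fst.prodMk ((measurable_emp N).comp measurable_snd)) _
  have hint : Integrable (fun y : X0 × (Fin N → X) => policyMean pt f (y.1, μ)) (m.prod n) :=
    h.integrable_policyMean_comp hf (measurable_fst.prodMk measurable_const) _
  have hW1 : Integrable (fun y : X0 × (Fin N → X) => W1 (emp N y.2) μ) (m.prod n) :=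
    (integrable_W1_emp μ n).comp_snd m
  have hfst : ∫ y : X0 × (Fin N → X), policyMean pt f (y.1, μ) ∂(m.prod n) =
      ∫ y0, policyMean pt f (y0, μ) ∂m := by
    simpa using integral_fun_fst (μ := m) (ν := n) fun y0 => policyMean pt f (y0, μ)
  have hsnd : ∫ y : X0 × (Fin N → X), W1 (emp N y.2) μ ∂(m.prod n) = ∫ x, W1 (emp N x) μ ∂n := by
    simpa using integral_fun_snd (μ := m) (ν := n) fun x => W1 (emp N x) μ
  have hagents : ∫ z, f (empState z) ∂((m.prod n).bind (policyLaw pt (emp N))) =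
      ∫ y : X0 × (Fin N → X), policyMean pt f (y.1, emp N y.2) ∂(m.prod n) :=
    h.integral_bind_policyLaw (measurable_emp N) hf measurable_id _
  have hlimit : ∫ z, f z ∂(m.bind fun y0 => policyLaw pt id (y0, μ)) =
      ∫ y0, policyMean pt f (y0, μ) ∂m :=
    h.integral_bind_policyLaw measurable_id hf measurable_prodMk_right _
  rw [hagents, hlimit, ← hfst, ← integral_sub hintN hint]
  calc ‖∫ y : X0 × (Fin N → X), policyMean pt f (y.1, emp N y.2) - policyMean pt f (y.1, μ)
        ∂(m.prod n)‖
      ≤ ∫ y : X0 × (Fin N → X), 2 * M * L * W1 (emp N y.2) μ ∂(m.prod n) :=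
        norm_integral_le_of_norm_le (hW1.const_mul _) <| ae_of_all _ fun y => by
          simpa using h.abs_policyMean_sub_le hL hf (y.1, emp N y.2) (y.1, μ)
    _ ≤ 2 * M * L * ε := by
        rw [integral_const_mul, hsnd]
        gcongr
    _ = L * (2 * M * ε) := by ring

lemma lipClose_pi_bind_policyLaw [Nonempty X] (h : LipschitzM3FC M p p0 Γ pt TG) {N : ℕ}
    (hN : N ≠ 0) (μ : ProbabilityMeasure X) (x0 : X0) :
    LipClose empState
      ((Measure.pi fun _ : Fin N => (μ : Measure X)).bind fun x => policyLaw pt (emp N) (x0, x))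
      (policyLaw pt id (x0, μ)) (2 * M * empDeviation X N) := by
  have hagents : Measurable (policyLaw pt (emp N) : X0 × (Fin N → X) → Measure _) :=
    h.measurable_policyLaw (measurable_emp N)
  have hlimit : Measurable fun y0 : X0 => policyLaw pt id (y0, μ) :=
    (h.measurable_policyLaw measurable_id).comp measurable_prodMk_right
  convert h.lipClose_bind_policyLaw (Measure.dirac x0) (Measure.pi fun _ : Fin N => (μ : Measure X))
    (integral_W1_emp_pi_const_le_empDeviation hN μ) using 1
  · rw [Measure.dirac_prod, Measure.bind, Measure.bind,
      Measure.map_map hagents measurable_prodMk_left]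
    rfl
  · exact (Measure.dirac_bind hlimit x0).symm

end BindPolicyLaw

lemma measurable_major (h : LipschitzM3FC M p p0 Γ pt TG) :
    Measurable fun s : MFState X X0 U0 Xi => p0 s.1 s.2.1.1 s.2.2 := by
  have hjoint : Measurable fun q : (X0 × U0) × ProbabilityMeasure X => p0 q.1.1 q.1.2 q.2 := by
    refine measurable_of_abs_integral_sub_le (M := M * 2) fun z z' μ μ' f hf => ?_
    refine (h.major _ _ _ _ _ _ f hf).trans ?_
    rw [mul_assoc]
    refine mul_le_mul_of_nonneg_left ?_ h.nonneg
    have hx0 : dist z.1 z'.1 ≤ dist z z' := le_max_left _ _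
    have hu0 : dist z.2 z'.2 ≤ dist z z' := le_max_right _ _
    linarith [W1_nonneg μ μ']
  exact hjoint.comp (g := fun q : (X0 × U0) × ProbabilityMeasure X => p0 q.1.1 q.1.2 q.2)
    (f := fun s : MFState X X0 U0 Xi => ((s.1, s.2.1.1), s.2.2)) (by fun_prop)

variable [CompactSpace U] [BorelSpace U]

lemma measurable_agent (h : LipschitzM3FC M p p0 Γ pt TG) :
    Measurable fun q : (X × U × X0 × U0) × ProbabilityMeasure X =>
      p q.1.1 q.1.2.1 q.1.2.2.1 q.1.2.2.2 q.2 := by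
  refine measurable_of_abs_integral_sub_le (M := M * 4) fun z z' μ μ' f hf => ?_
  refine (h.agent _ _ _ _ _ _ _ _ _ _ f hf).trans ?_
  rw [mul_assoc]
  refine mul_le_mul_of_nonneg_left ?_ h.nonneg
  have hx : dist z.1 z'.1 ≤ dist z z' := le_max_left _ _
  have hz₂ : dist z.2 z'.2 ≤ dist z z' := le_max_right _ _
  have hu : dist z.2.1 z'.2.1 ≤ dist z.2 z'.2 := le_max_left _ _
  have hz₃ : dist z.2.2 z'.2.2 ≤ dist z.2 z'.2 := le_max_right _ _
  have hx0 : dist z.2.2.1 z'.2.2.1 ≤ dist z.2.2 z'.2.2 := le_max_left _ _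
  have hu0 : dist z.2.2.2 z'.2.2.2 ≤ dist z.2.2 z'.2.2 := le_max_right _ _
  linarith [W1_nonneg μ μ']

lemma isProbabilityMeasure_agentLaw (h : LipschitzM3FC M p p0 Γ pt TG)
    (s : MFState X X0 U0 Xi) (x : X) : IsProbabilityMeasure (agentLaw p Γ s x) :=
  isProbabilityMeasure_bind (measurable_subtype_coe.comp <| h.measurable_agent.comp
    (f := fun u : U => ((x, u, s.1, s.2.1.1), s.2.2)) (by fun_prop)).aemeasurable
    (ae_of_all _ inferInstance)

lemma integral_agentLaw (h : LipschitzM3FC M p p0 Γ pt TG) {f : X → ℝ} (hf : LipschitzWith 1 f)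
    (s : MFState X X0 U0 Xi) (x : X) :
    ∫ y, f y ∂(agentLaw p Γ s x) =
      ∫ u, ∫ y, f y ∂(p x u s.1 s.2.1.1 s.2.2 : Measure X) ∂(Γ s.2.1.2 x : Measure U) := by
  have := h.isProbabilityMeasure_agentLaw s x
  have hp : Measurable fun u => (p x u s.1 s.2.1.1 s.2.2 : Measure X) :=
    measurable_subtype_coe.comp <| h.measurable_agent.comp
      (f := fun u : U => ((x, u, s.1, s.2.1.1), s.2.2)) (by fun_prop)
  exact integral_measure_bind hp (integrable_of_lipschitzWith hf (agentLaw p Γ s x))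

lemma abs_integral_agentLaw_sub_le (h : LipschitzM3FC M p p0 Γ pt TG) {f : X → ℝ}
    (hf : LipschitzWith 1 f) (s s' : MFState X X0 U0 Xi) (x x' : X) :
    |∫ y, f y ∂(agentLaw p Γ s x) - ∫ y, f y ∂(agentLaw p Γ s' x')| ≤
      2 * M ^ 2 * (dist x x' + stateDist s s') := by
  let F (s : MFState X X0 U0 Xi) (x : X) (u : U) : ℝ :=
    ∫ y, f y ∂(p x u s.1 s.2.1.1 s.2.2 : Measure X)
  have hF (s : MFState X X0 U0 Xi) (x : X) (u u' : U) : |F s x u - F s x u'| ≤ M * dist u u' := by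
    simpa [W1_self] using h.agent x x u u' s.1 s.1 s.2.1.1 s.2.1.1 s.2.2 s.2.2 f hf
  have hFF (u : U) : |F s x u - F s' x' u| ≤ M * (dist x x' + stateDist s s') := by
    refine (h.agent _ _ _ _ _ _ _ _ _ _ f hf).trans (mul_le_mul_of_nonneg_left ?_ h.nonneg)
    rw [dist_self, stateDist]
    linarith [dist_nonneg (x := s.2.1.2) (y := s'.2.1.2)]
  have hrule : dist s.2.1.2 s'.2.1.2 + dist x x' ≤ dist x x' + stateDist s s' := by
    rw [stateDist]
    linarith [dist_nonneg (x := s.1) (y := s'.1), dist_nonneg (x := s.2.1.1) (y := s'.2.1.1),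
      W1_nonneg s.2.2 s'.2.2]
  have hd : 0 ≤ dist x x' + stateDist s s' := add_nonneg dist_nonneg (stateDist_nonneg s s')
  rw [h.integral_agentLaw hf, h.integral_agentLaw hf]
  calc |∫ u, F s x u ∂(Γ s.2.1.2 x : Measure U) - ∫ u, F s' x' u ∂(Γ s'.2.1.2 x' : Measure U)|
      ≤ M * (M * (dist s.2.1.2 s'.2.1.2 + dist x x')) + M * (dist x x' + stateDist s s') :=
        abs_integral_sub_integral_le_mul_add
          (fun g hg => h.rule _ _ _ _ g (lipschitzWith_one_iff_abs_sub_le.mpr hg)) h.nonneg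
          (hF s x) hFF (integrable_of_abs_sub_le (hF s x) _) (integrable_of_abs_sub_le (hF s' x') _)
    _ ≤ M * (M * (dist x x' + stateDist s s')) + M * (M * (dist x x' + stateDist s s')) := by
        have := h.nonneg
        gcongr
        exact le_mul_of_one_le_left hd h.one_le
    _ = 2 * M ^ 2 * (dist x x' + stateDist s s') := by ring

variable [BorelSpace Xi]

lemma measurable_agentLaw (h : LipschitzM3FC M p p0 Γ pt TG) :
    Measurable fun q : MFState X X0 U0 Xi × X => agentLaw p Γ q.1 q.2 :=
  measurable_measure_bind
    (h.measurable_rule.comp (measurable_fst.snd.fst.snd.prodMk measurable_snd))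
    (measurable_subtype_coe.comp <| h.measurable_agent.comp
      (f := fun r : (MFState X X0 U0 Xi × X) × U =>
        ((r.1.2, r.2, r.1.1.1, r.1.1.2.1.1), r.1.1.2.2)) (by fun_prop))

lemma measurable_nextMeanField (h : LipschitzM3FC M p p0 Γ pt TG) :
    Measurable (nextMeanField TG : MFState X X0 U0 Xi → ProbabilityMeasure X) := by
  suffices Measurable fun s : MFState X X0 U0 Xi => (nextMeanField TG s : Measure X) from
    this.subtype_mk
  simp only [h.meanField]
  exact measurable_measure_bind measurable_snd.snd h.measurable_agentLaw

lemma W1_nextMeanField_le (h : LipschitzM3FC M p p0 Γ pt TG) (s s' : MFState X X0 U0 Xi) :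
    W1 (nextMeanField TG s) (nextMeanField TG s') ≤ 4 * M ^ 2 * stateDist s s' := by
  refine W1_le fun f hf => ?_
  let F (s : MFState X X0 U0 Xi) (x : X) : ℝ := ∫ y, f y ∂(agentLaw p Γ s x)
  have hint (s : MFState X X0 U0 Xi) :
      ∫ y, f y ∂(nextMeanField TG s : Measure X) = ∫ x, F s x ∂(s.2.2 : Measure X) := by
    have hf' := integrable_of_lipschitzWith hf (nextMeanField TG s : Measure X)
    rw [h.meanField] at hf' ⊢
    exact integral_measure_bind h.measurable_agentLaw.of_uncurry_left hf'
  have hF (s : MFState X X0 U0 Xi) (x x' : X) : |F s x - F s x'| ≤ 2 * M ^ 2 * dist x x' := by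
    simpa [stateDist, W1_self] using h.abs_integral_agentLaw_sub_le hf s s x x'
  have hFF (x : X) : |F s x - F s' x| ≤ 2 * M ^ 2 * stateDist s s' := by
    simpa using h.abs_integral_agentLaw_sub_le hf s s' x x
  rw [hint, hint]
  calc |∫ x, F s x ∂(s.2.2 : Measure X) - ∫ x, F s' x ∂(s'.2.2 : Measure X)|
      ≤ 2 * M ^ 2 * W1 s.2.2 s'.2.2 + 2 * M ^ 2 * stateDist s s' :=
        abs_integral_sub_integral_le_mul_add
          (fun g hg => abs_integral_sub_le_W1 _ _ (lipschitzWith_one_iff_abs_sub_le.mpr hg))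
          (by positivity) (hF s) hFF
          (integrable_of_abs_sub_le (hF s) _) (integrable_of_abs_sub_le (hF s') _)
    _ ≤ 2 * M ^ 2 * stateDist s s' + 2 * M ^ 2 * stateDist s s' := by
        gcongr
        exact le_add_of_nonneg_left (by positivity)
    _ = 4 * M ^ 2 * stateDist s s' := by ring

lemma coe_nextMeanField_empState [Nonempty X] (h : LipschitzM3FC M p p0 Γ pt TG) {N : ℕ}
    (hN : N ≠ 0) (s : AgentState X X0 U0 Xi N) :
    (nextMeanField TG (empState s) : Measure X) =
      (N : ENNReal)⁻¹ • ∑ i, agentLaw p Γ (empState s) (s.2.2 i) := by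
  have hκ : Measurable (agentLaw p Γ (empState s)) := h.measurable_agentLaw.of_uncurry_left
  rw [h.meanField]
  change (emp N s.2.2 : Measure X).bind _ = _
  rw [coe_emp hN, Measure.bind_smul, ← Measure.sum_fintype, Measure.bind_sum _ _ hκ.aemeasurable,
    Measure.sum_fintype]
  simp only [Measure.dirac_bind hκ]

lemma measurable_pi_agentLaw [Nonempty X] (h : LipschitzM3FC M p p0 Γ pt TG) (N : ℕ) :
    Measurable fun s : AgentState X X0 U0 Xi N =>
      Measure.pi fun i => agentLaw p Γ (empState s) (s.2.2 i) := by
  have (s : AgentState X X0 U0 Xi N) (i : Fin N) :=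
    h.isProbabilityMeasure_agentLaw (empState s) (s.2.2 i)
  exact measurable_measure_pi fun i => h.measurable_agentLaw.comp
    (f := fun s : AgentState X X0 U0 Xi N => (empState s, s.2.2 i))
    (measurable_empState.prodMk ((measurable_pi_apply i).comp measurable_snd.snd))

variable [CompactSpace Xi]

/-- The transition kernel of the limiting process. -/
noncomputable def limitKernel (h : LipschitzM3FC M p p0 Γ pt TG) :
    Kernel (MFState X X0 U0 Xi) (MFState X X0 U0 Xi) where
  toFun s := (p0 s.1 s.2.1.1 s.2.2 : Measure X0).bind fun y0 =>
    policyLaw pt id (y0, nextMeanField TG s)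
  measurable' := measurable_measure_bind h.measurable_major <|
    (h.measurable_policyLaw measurable_id).comp <|
      measurable_snd.prodMk (h.measurable_nextMeanField.comp measurable_fst)

instance (h : LipschitzM3FC M p p0 Γ pt TG) : IsMarkovKernel h.limitKernel where
  isProbabilityMeasure _ := isProbabilityMeasure_bind
    ((h.measurable_policyLaw measurable_id).comp measurable_prodMk_right).aemeasurable
    (ae_of_all _ inferInstance)

lemma pLimLawFrom_eq_chainLaw {Θ : Type*}
    {pit : Θ → X0 → ProbabilityMeasure X → ProbabilityMeasure (U0 × Xi)} {θ : Θ}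
    (h : LipschitzM3FC M p p0 Γ (pit θ) TG) (P : Measure (MFState X X0 U0 Xi)) (t : ℕ) :
    pLimLawFrom p0 pit TG θ P t = chainLaw h.limitKernel P t := by
  induction t with
  | zero => rfl
  | succ t ih =>
    simp only [pLimLawFrom, chainLaw, ih]
    rfl

lemma lipschitzKernel_limitKernel (h : LipschitzM3FC M p p0 Γ pt TG) :
    LipschitzKernel (10 * M ^ 3) h.limitKernel := by
  intro L hL f hf s s'
  have hM := h.nonneg
  have hd := stateDist_nonneg s s'
  let G (s : MFState X X0 U0 Xi) (y0 : X0) : ℝ := policyMean pt f (y0, nextMeanField TG s)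
  have hint (s : MFState X X0 U0 Xi) :
      ∫ z, f z ∂(h.limitKernel s) = ∫ y0, G s y0 ∂(p0 s.1 s.2.1.1 s.2.2 : Measure X0) :=
    h.integral_bind_policyLaw measurable_id hf measurable_prodMk_right _
  have hG (s : MFState X X0 U0 Xi) (y y' : X0) : |G s y - G s y'| ≤ 2 * M * L * dist y y' := by
    simpa [W1_self] using h.abs_policyMean_sub_le hL hf (y, nextMeanField TG s)
      (y', nextMeanField TG s)
  have hGG (y : X0) : |G s y - G s' y| ≤ 2 * M * L * (4 * M ^ 2 * stateDist s s') := by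
    refine (h.abs_policyMean_sub_le hL hf _ _).trans ?_
    rw [dist_self, zero_add]
    exact mul_le_mul_of_nonneg_left (h.W1_nextMeanField_le s s') (by positivity)
  have hmajor : M * (dist s.1 s'.1 + dist s.2.1.1 s'.2.1.1 + W1 s.2.2 s'.2.2) ≤
      M ^ 2 * stateDist s s' :=
    calc M * (dist s.1 s'.1 + dist s.2.1.1 s'.2.1.1 + W1 s.2.2 s'.2.2) ≤ M * stateDist s s' := by
          refine mul_le_mul_of_nonneg_left ?_ hM
          rw [stateDist]
          linarith [dist_nonneg (x := s.2.1.2) (y := s'.2.1.2)]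
      _ ≤ M ^ 2 * stateDist s s' := mul_le_mul_of_nonneg_right (by nlinarith [h.one_le]) hd
  simp only [Real.norm_eq_abs, hint]
  calc |∫ y, G s y ∂(p0 s.1 s.2.1.1 s.2.2 : Measure X0) -
        ∫ y, G s' y ∂(p0 s'.1 s'.2.1.1 s'.2.2 : Measure X0)|
      ≤ 2 * M * L * (M * (dist s.1 s'.1 + dist s.2.1.1 s'.2.1.1 + W1 s.2.2 s'.2.2)) +
          2 * M * L * (4 * M ^ 2 * stateDist s s') :=
        abs_integral_sub_integral_le_mul_add
          (fun g hg => h.major _ _ _ _ _ _ g (lipschitzWith_one_iff_abs_sub_le.mpr hg))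
          (by positivity) (hG s) hGG
          (integrable_of_abs_sub_le (hG s) _) (integrable_of_abs_sub_le (hG s') _)
    _ ≤ 2 * M * L * (M ^ 2 * stateDist s s') + 2 * M * L * (4 * M ^ 2 * stateDist s s') := by
        gcongr
    _ = 10 * M ^ 3 * L * stateDist s s' := by ring

lemma stateLipschitz_expectedReward_smul {E : Type*} [NormedAddCommGroup E] [NormedSpace ℝ E]
    (h : LipschitzM3FC M p p0 Γ pt TG) {f : MFState X X0 U0 Xi → ℝ} {v : MFState X X0 U0 Xi → E}
    {L Lv R C : ℝ} (hL : 0 ≤ L) (hf : StateLipschitz L f) (hfR : ∀ s, |f s| ≤ R)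
    (hv : StateLipschitz Lv v) (hvC : ∀ s, ‖v s‖ ≤ C) (k : ℕ) :
    StateLipschitz (R * Lv + C * ((10 * M ^ 3) ^ k * L))
      fun s => expectedReward h.limitKernel Measure.dirac f k s • v s :=
  have hM := h.nonneg
  (h.lipschitzKernel_limitKernel.integral_chainLaw_dirac (by positivity) hL hf k).smul
    (abs_expectedReward_le hfR k) hv hvC

variable [Nonempty X]

/-- The transition kernel of the `N`-agent system. -/
noncomputable def agentKernel (h : LipschitzM3FC M p p0 Γ pt TG) (N : ℕ) :
    Kernel (AgentState X X0 U0 Xi N) (AgentState X X0 U0 Xi N) where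
  toFun s := ((p0 s.1 s.2.1.1 (emp N s.2.2) : Measure X0).prod
    (Measure.pi fun i => agentLaw p Γ (empState s) (s.2.2 i))).bind (policyLaw pt (emp N))
  measurable' := (Measure.measurable_bind' (h.measurable_policyLaw (measurable_emp N))).comp <| by
    have (s : AgentState X X0 U0 Xi N) (i : Fin N) :=
      h.isProbabilityMeasure_agentLaw (empState s) (s.2.2 i)
    let n (s : AgentState X X0 U0 Xi N) : ProbabilityMeasure (Fin N → X) :=
      ⟨Measure.pi fun i => agentLaw p Γ (empState s) (s.2.2 i), inferInstance⟩
    have hn : Measurable n := (h.measurable_pi_agentLaw N).subtype_mk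
    exact ProbabilityMeasure.measurable_fun_prod.comp
      ((h.measurable_major.comp measurable_empState).prodMk hn)

instance (h : LipschitzM3FC M p p0 Γ pt TG) (N : ℕ) : IsMarkovKernel (h.agentKernel N) where
  isProbabilityMeasure s := by
    have (i : Fin N) := h.isProbabilityMeasure_agentLaw (empState s) (s.2.2 i)
    exact isProbabilityMeasure_bind (h.measurable_policyLaw (measurable_emp N)).aemeasurable
      (ae_of_all _ inferInstance)

lemma pLawNFrom_eq_chainLaw {Θ : Type*}
    {pit : Θ → X0 → ProbabilityMeasure X → ProbabilityMeasure (U0 × Xi)} {θ : Θ}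
    (h : LipschitzM3FC M p p0 Γ (pit θ) TG) (N : ℕ) (P : Measure (AgentState X X0 U0 Xi N))
    (t : ℕ) : pLawNFrom p p0 Γ pit θ N P t = chainLaw (h.agentKernel N) P t := by
  induction t with
  | zero => rfl
  | succ t ih =>
    simp only [pLawNFrom, chainLaw, ih]
    rfl

lemma lipClose_agentKernel_limitKernel (h : LipschitzM3FC M p p0 Γ pt TG) {N : ℕ} (hN : N ≠ 0)
    (s : AgentState X X0 U0 Xi N) :
    LipClose empState (h.agentKernel N s) (h.limitKernel (empState s))
      (2 * M * empDeviation X N) := by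
  have (i : Fin N) := h.isProbabilityMeasure_agentLaw (empState s) (s.2.2 i)
  exact h.lipClose_bind_policyLaw _ _ <|
    integral_W1_emp_le_empDeviation _ (h.coe_nextMeanField_empState hN s)

/-- The rate, in units of `empDeviation X N`, at which the laws of the `N`-agent system and of the
limiting process can drift apart within `t` steps. -/
def driftRate (M : ℝ) (t : ℕ) : ℝ :=
  (∑ i ∈ Finset.range (t + 1), (10 * M ^ 3) ^ i) * (2 * M)

lemma driftRate_nonneg (hM : 0 ≤ M) (t : ℕ) : 0 ≤ driftRate M t := by
  unfold driftRate
  positivity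

lemma lipClose_chainLaw (h : LipschitzM3FC M p p0 Γ pt TG) {N : ℕ} (hN : N ≠ 0)
    {P : Measure (AgentState X X0 U0 Xi N)} {P' : Measure (MFState X X0 U0 Xi)}
    [IsProbabilityMeasure P] [IsProbabilityMeasure P']
    (hP : LipClose empState P P' (2 * M * empDeviation X N)) (t : ℕ) :
    LipClose empState (chainLaw (h.agentKernel N) P t) (chainLaw h.limitKernel P' t)
      (driftRate M t * empDeviation X N) := by
  have hM := h.nonneg
  convert hP.chainLaw measurable_empState (by positivity) h.lipschitzKernel_limitKernel
    (h.lipClose_agentKernel_limitKernel hN) t using 1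
  rw [driftRate, Finset.sum_range_succ]
  ring

section GradientTerm

variable {E : Type*} [NormedAddCommGroup E] [NormedSpace ℝ E]
  {f : MFState X X0 U0 Xi → ℝ} {v : MFState X X0 U0 Xi → E} {L Lv R C : ℝ}

/-- The constant in the comparison of the gradient terms of the two systems, for a reward function
and a score with Lipschitz constants `L` and `Lv` and bounds `R` and `C`. -/
def gradientRate (M L Lv R C : ℝ) (t k : ℕ) : ℝ :=
  L * driftRate M k * C + (R * Lv + C * ((10 * M ^ 3) ^ k * L)) * driftRate M t

lemma abs_expectedReward_sub_le (h : LipschitzM3FC M p p0 Γ pt TG) (hL : 0 ≤ L)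
    (hf : StateLipschitz L f) {N : ℕ} (hN : N ≠ 0) (k : ℕ) (z : AgentState X X0 U0 Xi N) :
    |expectedReward (h.agentKernel N) (fun z => iidLaw N (empState z)) (fun z => f (empState z)) k z
        - expectedReward h.limitKernel Measure.dirac f k (empState z)| ≤
      L * (driftRate M k * empDeviation X N) := by
  have hiid : LipClose empState (iidLaw N (empState z)) (Measure.dirac (empState z))
      (2 * M * empDeviation X N) :=
    (lipClose_iidLaw hN _).mono <|
      le_mul_of_one_le_left (empDeviation_nonneg X N) (by linarith [h.one_le])
  exact h.lipClose_chainLaw hN hiid k L hL f hf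

lemma norm_integral_expectedReward_smul_sub_le (h : LipschitzM3FC M p p0 Γ pt TG) (hL : 0 ≤ L)
    (hf : StateLipschitz L f) (hfR : ∀ s, |f s| ≤ R) (hv : StateLipschitz Lv v)
    (hvC : ∀ s, ‖v s‖ ≤ C) {N : ℕ} (hN : N ≠ 0) (P : Measure (AgentState X X0 U0 Xi N))
    [IsProbabilityMeasure P] (t k : ℕ) :
    ‖∫ z, expectedReward (h.agentKernel N) (fun z => iidLaw N (empState z))
          (fun z => f (empState z)) k z • v (empState z) ∂(chainLaw (h.agentKernel N) P t) -
        ∫ z, expectedReward h.limitKernel Measure.dirac f k (empState z) • v (empState z)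
          ∂(chainLaw (h.agentKernel N) P t)‖ ≤
      L * (driftRate M k * empDeviation X N) * C := by
  have hagent : Integrable (fun z => expectedReward (h.agentKernel N)
      (fun z => iidLaw N (empState z)) (fun z => f (empState z)) k z • v (empState z))
      (chainLaw (h.agentKernel N) P t) :=
    integrable_expectedReward_smul (ι := fun z => iidLaw N (empState z))
      ((measurable_iidLaw N).comp measurable_empState)
      (hf.stronglyMeasurable.comp_measurable measurable_empState) (fun z => hfR _)
      (hv.stronglyMeasurable.comp_measurable measurable_empState) (fun z => hvC _) _ k
  have hlimit := (h.stateLipschitz_expectedReward_smul hL hf hfR hv hvC k).integrable_comp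
    measurable_empState (chainLaw (h.agentKernel N) P t)
  rw [← integral_sub hagent hlimit]
  simp only [← sub_smul]
  refine norm_integral_chainLaw_le (fun z => ?_) P t
  have hvalue := h.abs_expectedReward_sub_le hL hf hN k z
  rw [norm_smul]
  exact mul_le_mul hvalue (hvC _) (norm_nonneg _) ((abs_nonneg _).trans hvalue)

variable [CompleteSpace E]

lemma norm_gradientTerm_sub_le (h : LipschitzM3FC M p p0 Γ pt TG) (hL : 0 ≤ L) (hLv : 0 ≤ Lv)
    (hf : StateLipschitz L f) (hfR : ∀ s, |f s| ≤ R) (hv : StateLipschitz Lv v)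
    (hvC : ∀ s, ‖v s‖ ≤ C) {N : ℕ} (hN : N ≠ 0)
    {P : Measure (AgentState X X0 U0 Xi N)} {P' : Measure (MFState X X0 U0 Xi)}
    [IsProbabilityMeasure P] [IsProbabilityMeasure P']
    (hP : LipClose empState P P' (2 * M * empDeviation X N)) (t k : ℕ) :
    ‖gradientTerm (h.agentKernel N) (fun z => iidLaw N (empState z)) (fun z => f (empState z))
        (fun z => v (empState z)) P t k - gradientTerm h.limitKernel Measure.dirac f v P' t k‖ ≤
      gradientRate M L Lv R C t k * empDeviation X N := by
  have hM := h.nonneg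
  have hdev : 0 ≤ driftRate M t * empDeviation X N :=
    mul_nonneg (driftRate_nonneg hM t) (empDeviation_nonneg X N)
  obtain ⟨s₀⟩ : Nonempty (MFState X X0 U0 Xi) := P'.nonempty_of_neZero
  have hR : 0 ≤ R := (abs_nonneg _).trans (hfR s₀)
  have hC : 0 ≤ C := (norm_nonneg _).trans (hvC s₀)
  let q : MFState X X0 U0 Xi → ℝ := expectedReward h.limitKernel Measure.dirac f k
  let PN : Measure (AgentState X X0 U0 Xi N) := chainLaw (h.agentKernel N) P t
  have hlaw : ‖∫ z, q (empState z) • v (empState z) ∂PN -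
      ∫ s, q s • v s ∂(chainLaw h.limitKernel P' t)‖ ≤
        (R * Lv + C * ((10 * M ^ 3) ^ k * L)) * (driftRate M t * empDeviation X N) :=
    (h.lipClose_chainLaw hN hP t).norm_integral_sub_le measurable_empState hdev (by positivity)
      (h.stateLipschitz_expectedReward_smul hL hf hfR hv hvC k)
  calc _ ≤ _ := (norm_sub_le_norm_sub_add_norm_sub _ _ _).trans (add_le_add
        (h.norm_integral_expectedReward_smul_sub_le hL hf hfR hv hvC hN P t k) hlaw)
    _ = gradientRate M L Lv R C t k * empDeviation X N := by
        rw [gradientRate]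
        ring

section Uniform

variable {Θ : Type*} {pit : Θ → X0 → ProbabilityMeasure X → ProbabilityMeasure (U0 × Xi)}
  {w : Θ → MFState X X0 U0 Xi → E} {P : (N : ℕ) → Θ → Measure (AgentState X X0 U0 Xi N)}
  {P' : Θ → Measure (MFState X X0 U0 Xi)} [∀ N θ, IsProbabilityMeasure (P N θ)]
  [∀ θ, IsProbabilityMeasure (P' θ)]

lemma tendstoUniformly_gradientTerm (h : ∀ θ, LipschitzM3FC M p p0 Γ (pit θ) TG) (hL : 0 ≤ L)
    (hLv : 0 ≤ Lv) (hf : StateLipschitz L f) (hfR : ∀ s, |f s| ≤ R)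
    (hw : ∀ θ, StateLipschitz Lv (w θ)) (hwC : ∀ θ s, ‖w θ s‖ ≤ C)
    (hP : ∀ N ≠ 0, ∀ θ, LipClose empState (P N θ) (P' θ) (2 * M * empDeviation X N)) (t k : ℕ) :
    TendstoUniformly
      (fun N θ => gradientTerm ((h θ).agentKernel N) (fun z => iidLaw N (empState z))
        (fun z => f (empState z)) (fun z => w θ (empState z)) (P N θ) t k)
      (fun θ => gradientTerm (h θ).limitKernel Measure.dirac f (w θ) (P' θ) t k) atTop := by
  have hrate : Tendsto (fun N => gradientRate M L Lv R C t k * empDeviation X N) atTop (𝓝 0) := by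
    simpa using (tendsto_empDeviation X).const_mul (gradientRate M L Lv R C t k)
  rw [tendstoUniformly_iff_tendsto_sub]
  refine squeeze_zero_norm' ?_ (hrate.comp tendsto_fst)
  filter_upwards [(eventually_ne_atTop 0).prod_inl ⊤] with ⟨N, θ⟩ hN
  exact (h θ).norm_gradientTerm_sub_le hL hLv hf hfR (hw θ) (hwC θ) hN (hP N hN θ) t k

theorem tendstoUniformly_policyGradient (h : ∀ θ, LipschitzM3FC M p p0 Γ (pit θ) TG) {γ : ℝ}
    (hγ : |γ| < 1) (hL : 0 ≤ L) (hLv : 0 ≤ Lv) (hf : StateLipschitz L f)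
    (hw : ∀ θ, StateLipschitz Lv (w θ)) (hwC : ∀ θ s, ‖w θ s‖ ≤ C)
    (hP : ∀ N ≠ 0, ∀ θ, LipClose empState (P N θ) (P' θ) (2 * M * empDeviation X N)) :
    TendstoUniformly
      (fun N θ => policyGradient γ ((h θ).agentKernel N) (fun z => iidLaw N (empState z))
        (fun z => f (empState z)) (fun z => w θ (empState z)) (P N θ))
      (fun θ => policyGradient γ (h θ).limitKernel Measure.dirac f (w θ) (P' θ)) atTop := by
  obtain ⟨R, hfR⟩ := hf.exists_norm_le
  have hagents (N : ℕ) (θ : Θ) := policyGradient_eq_tsum_tsum_gradientTerm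
    (κ := (h θ).agentKernel N) (ι := fun z => iidLaw N (empState z))
    (f := fun z => f (empState z)) (v := fun z => w θ (empState z)) hγ
    ((measurable_iidLaw N).comp measurable_empState)
    (hf.stronglyMeasurable.comp_measurable measurable_empState) (fun z => hfR _)
    ((hw θ).stronglyMeasurable.comp_measurable measurable_empState) (fun z => hwC θ _) (P N θ)
  have hlimit (θ : Θ) := policyGradient_eq_tsum_tsum_gradientTerm (κ := (h θ).limitKernel) hγ
    Measure.measurable_dirac hf.stronglyMeasurable hfR (hw θ).stronglyMeasurable (hwC θ) (P' θ)
  simp only [hagents, hlimit]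
  have hagents_le (N : ℕ) (θ : Θ) (t k : ℕ) := norm_gradientTerm_le
    (κ := (h θ).agentKernel N) (ι := fun z => iidLaw N (empState z))
    (f := fun z => f (empState z)) (v := fun z => w θ (empState z)) (fun z => hfR _)
    (fun z => hwC θ _) (P N θ) t k
  have hlimit_le (θ : Θ) (t k : ℕ) := norm_gradientTerm_le (κ := (h θ).limitKernel)
    (ι := Measure.dirac) hfR (hwC θ) (P' θ) t k
  exact tendstoUniformly_tsum_pow_smul hγ
    (fun N θ t => norm_tsum_pow_smul_le hγ (hagents_le N θ t))
    (fun θ t => norm_tsum_pow_smul_le hγ (hlimit_le θ t))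
    fun t => tendstoUniformly_tsum_pow_smul hγ (fun N θ => hagents_le N θ t)
      (fun θ => hlimit_le θ t) fun k => tendstoUniformly_gradientTerm h hL hLv hf hfR hw hwC hP t k

end Uniform

end GradientTerm

end LipschitzM3FC

end Model

lemma stateLipschitz_reward {X X0 U0 Xi : Type*} [MetricSpace X] [MeasurableSpace X]
    [MetricSpace X0] [MetricSpace U0] [MetricSpace Xi] {L : ℝ}
    {r : X0 → U0 → ProbabilityMeasure X → ℝ}
    (hr : ∀ (x0 x0' : X0) (u0 u0' : U0) (μ μ' : ProbabilityMeasure X),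
      |r x0 u0 μ - r x0' u0' μ'| ≤ L * (dist x0 x0' + dist u0 u0' + W1 μ μ')) :
    StateLipschitz |L| fun s : MFState X X0 U0 Xi => r s.1 s.2.1.1 s.2.2 := fun s s' => by
  have hW1 := W1_nonneg s.2.2 s'.2.2
  refine (hr _ _ _ _ _ _).trans <|
    mul_le_mul (le_abs_self L) ?_ (by positivity) (abs_nonneg L)
  rw [stateDist]
  linarith [dist_nonneg (x := s.2.1.2) (y := s'.2.1.2)]

lemma stateLipschitz_score {X X0 U0 Xi E : Type*} [MetricSpace X] [MeasurableSpace X]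
    [MetricSpace X0] [MetricSpace U0] [MetricSpace Xi] [NormedAddCommGroup E] {L : ℝ}
    {v : X0 → ProbabilityMeasure X → U0 × Xi → E}
    (hv : ∀ (x0 x0' : X0) (μ μ' : ProbabilityMeasure X) (a a' : U0 × Xi),
      ‖v x0 μ a - v x0' μ' a'‖ ≤ L * (dist x0 x0' + W1 μ μ' + dist a.1 a'.1 + dist a.2 a'.2)) :
    StateLipschitz |L| fun s : MFState X X0 U0 Xi => v s.1 s.2.2 s.2.1 := fun s s' => by
  have hW1 := W1_nonneg s.2.2 s'.2.2
  refine (hv _ _ _ _ _ _).trans <|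
    mul_le_mul (le_abs_self L) ?_ (by positivity) (abs_nonneg L)
  rw [stateDist]
  linarith

theorem statement19_general {X U X0 U0 Xi Θ E : Type*}
    [MetricSpace X] [CompactSpace X] [MeasurableSpace X] [BorelSpace X] [Nonempty X]
    [MetricSpace U] [CompactSpace U] [MeasurableSpace U] [BorelSpace U]
    [MetricSpace X0] [CompactSpace X0] [MeasurableSpace X0] [BorelSpace X0]
    [MetricSpace U0] [CompactSpace U0] [MeasurableSpace U0] [BorelSpace U0]
    [MetricSpace Xi] [CompactSpace Xi] [MeasurableSpace Xi] [BorelSpace Xi]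
    [NormedAddCommGroup E] [NormedSpace ℝ E] [CompleteSpace E]
    {Lp Lp0 Lr LPi LΓ Lpit Ls Cs : ℝ}
    (p : X → U → X0 → U0 → ProbabilityMeasure X → ProbabilityMeasure X)
    (hp : ∀ (x x' : X) (u u' : U) (x0 x0' : X0) (u0 u0' : U0)
        (μ μ' : ProbabilityMeasure X) (f : X → ℝ), LipschitzWith 1 f →
      |∫ y, f y ∂(p x u x0 u0 μ : Measure X) - ∫ y, f y ∂(p x' u' x0' u0' μ' : Measure X)|
        ≤ Lp * (dist x x' + dist u u' + dist x0 x0' + dist u0 u0' + W1 μ μ'))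
    (p0 : X0 → U0 → ProbabilityMeasure X → ProbabilityMeasure X0)
    (hp0 : ∀ (x0 x0' : X0) (u0 u0' : U0) (μ μ' : ProbabilityMeasure X) (f : X0 → ℝ),
        LipschitzWith 1 f →
      |∫ y, f y ∂(p0 x0 u0 μ : Measure X0) - ∫ y, f y ∂(p0 x0' u0' μ' : Measure X0)|
        ≤ Lp0 * (dist x0 x0' + dist u0 u0' + W1 μ μ'))
    (r : X0 → U0 → ProbabilityMeasure X → ℝ)
    (hr : ∀ (x0 x0' : X0) (u0 u0' : U0) (μ μ' : ProbabilityMeasure X),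
      |r x0 u0 μ - r x0' u0' μ'| ≤ Lr * (dist x0 x0' + dist u0 u0' + W1 μ μ'))
    (Γ : Xi → X → ProbabilityMeasure U)
    (hΓrule : ∀ (ξ : Xi) (x x' : X) (g : U → ℝ), LipschitzWith 1 g →
      |∫ u, g u ∂(Γ ξ x : Measure U) - ∫ u, g u ∂(Γ ξ x' : Measure U)| ≤ LPi * dist x x')
    (hΓ : ∀ (ξ ξ' : Xi) (x : X) (g : U → ℝ), LipschitzWith 1 g →
      |∫ u, g u ∂(Γ ξ x : Measure U) - ∫ u, g u ∂(Γ ξ' x : Measure U)| ≤ LΓ * dist ξ ξ')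
    (pit : Θ → X0 → ProbabilityMeasure X → ProbabilityMeasure (U0 × Xi))
    (hpit : ∀ (θ : Θ) (x0 x0' : X0) (μ μ' : ProbabilityMeasure X) (g : U0 × Xi → ℝ),
      (∀ a b : U0 × Xi, |g a - g b| ≤ dist a.1 b.1 + dist a.2 b.2) →
      |∫ a, g a ∂(pit θ x0 μ : Measure (U0 × Xi))
          - ∫ a, g a ∂(pit θ x0' μ' : Measure (U0 × Xi))|
        ≤ Lpit * (dist x0 x0' + W1 μ μ'))
    (score : Θ → X0 → ProbabilityMeasure X → U0 × Xi → E)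
    (hscoreB : ∀ θ x0 μ a, ‖score θ x0 μ a‖ ≤ Cs)
    (hscoreL : ∀ (θ : Θ) (x0 x0' : X0) (μ μ' : ProbabilityMeasure X) (a a' : U0 × Xi),
      ‖score θ x0 μ a - score θ x0' μ' a'‖
        ≤ Ls * (dist x0 x0' + W1 μ μ' + dist a.1 a'.1 + dist a.2 a'.2))
    (μ0 : ProbabilityMeasure X) (x00 : X0)
    (TG : X0 → U0 → Xi → ProbabilityMeasure X → ProbabilityMeasure X)
    (hTG : ∀ (x0 : X0) (u0 : U0) (ξ : Xi) (μ : ProbabilityMeasure X),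
      (TG x0 u0 ξ μ : Measure X) = (μ : Measure X).bind fun x =>
        ((Γ ξ x : Measure U)).bind fun u => (p x u x0 u0 μ : Measure X))
    {γ : ℝ} (hγ : |γ| < 1)
    (Qhat : (N : ℕ) → Θ → X0 → ProbabilityMeasure X → U0 → Xi → ℝ)
    (hQhat : ∀ (N : ℕ) (θ : Θ) (x0 : X0) (μ : ProbabilityMeasure X) (u0 : U0) (ξ : Xi),
      Qhat N θ x0 μ u0 ξ = ∑' t : ℕ, γ ^ t * ∫ s, r s.1 s.2.1.1 (emp N s.2.2)
        ∂(pLawNFrom p p0 Γ pit θ N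
          ((Measure.pi fun _ : Fin N => (μ : Measure X)).map fun x => (x0, (u0, ξ), x)) t))
    (Qlim : Θ → X0 → ProbabilityMeasure X → U0 → Xi → ℝ)
    (hQlim : ∀ (θ : Θ) (x0 : X0) (μ : ProbabilityMeasure X) (u0 : U0) (ξ : Xi),
      Qlim θ x0 μ u0 ξ = ∑' t : ℕ, γ ^ t * ∫ s, r s.1 s.2.1.1 s.2.2
        ∂(pLimLawFrom p0 pit TG θ (Measure.dirac (x0, (u0, ξ), μ)) t)) :
    ∀ ε > (0 : ℝ), ∃ N0 : ℕ, ∀ N ≥ N0, ∀ θ : Θ,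
      ‖(∑' t : ℕ, γ ^ t •
          ∫ s, Qhat N θ s.1 (emp N s.2.2) s.2.1.1 s.2.1.2 • score θ s.1 (emp N s.2.2) s.2.1
            ∂(pLawNFrom p p0 Γ pit θ N
              ((Measure.pi fun _ : Fin N => (μ0 : Measure X)).bind fun x =>
                ((pit θ x00 (emp N x) : Measure (U0 × Xi))).map fun a => (x00, a, x)) t))
        - ∑' t : ℕ, γ ^ t •
          ∫ s, Qlim θ s.1 s.2.2 s.2.1.1 s.2.1.2 • score θ s.1 s.2.2 s.2.1
            ∂(pLimLawFrom p0 pit TG θ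
              (((pit θ x00 μ0 : Measure (U0 × Xi))).map fun a => (x00, a, μ0)) t)‖ ≤ ε := by
  have h (θ : Θ) := LipschitzM3FC.of_separate_constants hp hp0 hΓrule hΓ (hpit θ) hTG
  have (N : ℕ) (θ : Θ) := (h θ).isProbabilityMeasure_pi_bind_policyLaw N μ0 x00
  have hgradient := LipschitzM3FC.tendstoUniformly_policyGradient h hγ (abs_nonneg Lr)
    (abs_nonneg Ls) (stateLipschitz_reward hr) (fun θ => stateLipschitz_score (hscoreL θ))
    (fun θ s => hscoreB θ _ _ _) fun N hN θ => (h θ).lipClose_pi_bind_policyLaw hN μ0 x00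
  intro ε hε
  obtain ⟨N0, hN0⟩ := eventually_atTop.mp (Metric.tendstoUniformly_iff.mp hgradient ε hε)
  refine ⟨N0, fun N hN θ => ?_⟩
  simp only [hQhat, hQlim, (h θ).pLawNFrom_eq_chainLaw, (h θ).pLimLawFrom_eq_chainLaw]
  exact (dist_eq_norm' _ _).symm.trans_le (hN0 N hN θ).le

/-- policy gradient approximation by the finite system. With
`∇_θ J(π̃^θ) = Σ_t γ^t E[Q^θ(x⁰ₜ,μₜ,u⁰ₜ,ξₜ) ∇_θ log π̃^θ(u⁰ₜ,ξₜ|x⁰ₜ,μₜ)]` the exact policy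
gradient of the limiting M3FC MDP and `∇̂_θ J(π̃^θ)` its approximation computed on the
`N`-agent M3FC system, `‖∇̂_θ J(π̃^θ) − ∇_θ J(π̃^θ)‖ → 0` as `N → ∞`, uniformly over the
policy parameters `θ`. -/
theorem statement19 {X U X0 U0 Xi Θ : Type*}
    [MetricSpace X] [CompactSpace X] [MeasurableSpace X] [BorelSpace X] [Nonempty X]
    [MetricSpace U] [CompactSpace U] [MeasurableSpace U] [BorelSpace U]
    [MetricSpace X0] [CompactSpace X0] [MeasurableSpace X0] [BorelSpace X0]
    [MetricSpace U0] [CompactSpace U0] [MeasurableSpace U0] [BorelSpace U0]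
    [MetricSpace Xi] [CompactSpace Xi] [MeasurableSpace Xi] [BorelSpace Xi]
    [NormedAddCommGroup Θ] [NormedSpace ℝ Θ] [CompleteSpace Θ]
    (Lp Lp0 Lr LPi LΓ Lpit Ls Cs LF : ℝ)
    (p : X → U → X0 → U0 → ProbabilityMeasure X → ProbabilityMeasure X)
    (hp : ∀ (x x' : X) (u u' : U) (x0 x0' : X0) (u0 u0' : U0)
        (μ μ' : ProbabilityMeasure X) (f : X → ℝ), LipschitzWith 1 f →
      |∫ y, f y ∂(p x u x0 u0 μ : Measure X) - ∫ y, f y ∂(p x' u' x0' u0' μ' : Measure X)|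
        ≤ Lp * (dist x x' + dist u u' + dist x0 x0' + dist u0 u0' + W1 μ μ'))
    (p0 : X0 → U0 → ProbabilityMeasure X → ProbabilityMeasure X0)
    (hp0 : ∀ (x0 x0' : X0) (u0 u0' : U0) (μ μ' : ProbabilityMeasure X) (f : X0 → ℝ),
        LipschitzWith 1 f →
      |∫ y, f y ∂(p0 x0 u0 μ : Measure X0) - ∫ y, f y ∂(p0 x0' u0' μ' : Measure X0)|
        ≤ Lp0 * (dist x0 x0' + dist u0 u0' + W1 μ μ'))
    (r : X0 → U0 → ProbabilityMeasure X → ℝ)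
    (hr : ∀ (x0 x0' : X0) (u0 u0' : U0) (μ μ' : ProbabilityMeasure X),
      |r x0 u0 μ - r x0' u0' μ'| ≤ Lr * (dist x0 x0' + dist u0 u0' + W1 μ μ'))
    (Γ : Xi → X → ProbabilityMeasure U)
    (hΓrule : ∀ (ξ : Xi) (x x' : X) (g : U → ℝ), LipschitzWith 1 g →
      |∫ u, g u ∂(Γ ξ x : Measure U) - ∫ u, g u ∂(Γ ξ x' : Measure U)| ≤ LPi * dist x x')
    (hΓ : ∀ (ξ ξ' : Xi) (x : X) (g : U → ℝ), LipschitzWith 1 g →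
      |∫ u, g u ∂(Γ ξ x : Measure U) - ∫ u, g u ∂(Γ ξ' x : Measure U)| ≤ LΓ * dist ξ ξ')
    (pit : Θ → X0 → ProbabilityMeasure X → ProbabilityMeasure (U0 × Xi))
    (hpit : ∀ (θ θ' : Θ) (x0 x0' : X0) (μ μ' : ProbabilityMeasure X) (g : U0 × Xi → ℝ),
      (∀ a b : U0 × Xi, |g a - g b| ≤ dist a.1 b.1 + dist a.2 b.2) →
      |∫ a, g a ∂(pit θ x0 μ : Measure (U0 × Xi))
          - ∫ a, g a ∂(pit θ' x0' μ' : Measure (U0 × Xi))|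
        ≤ Lpit * (dist θ θ' + dist x0 x0' + W1 μ μ'))
    (score : Θ → X0 → ProbabilityMeasure X → U0 × Xi → Θ)
    (hscoreB : ∀ θ x0 μ a, ‖score θ x0 μ a‖ ≤ Cs)
    (hscoreL : ∀ (θ θ' : Θ) (x0 x0' : X0) (μ μ' : ProbabilityMeasure X) (a a' : U0 × Xi),
      ‖score θ x0 μ a - score θ' x0' μ' a'‖
        ≤ Ls * (dist θ θ' + dist x0 x0' + W1 μ μ' + dist a.1 a'.1 + dist a.2 a'.2))
    (μ0 : ProbabilityMeasure X) (x00 : X0)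
    (TG : X0 → U0 → Xi → ProbabilityMeasure X → ProbabilityMeasure X)
    (hTG : ∀ (x0 : X0) (u0 : U0) (ξ : Xi) (μ : ProbabilityMeasure X),
      (TG x0 u0 ξ μ : Measure X) = (μ : Measure X).bind fun x =>
        ((Γ ξ x : Measure U)).bind fun u => (p x u x0 u0 μ : Measure X))
    (γ : ℝ) (hγ0 : 0 < γ) (hγ1 : γ < 1)
    (Qhat : (N : ℕ) → Θ → X0 → ProbabilityMeasure X → U0 → Xi → ℝ)
    (hQhat : ∀ (N : ℕ) (θ : Θ) (x0 : X0) (μ : ProbabilityMeasure X) (u0 : U0) (ξ : Xi),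
      Qhat N θ x0 μ u0 ξ = ∑' t : ℕ, γ ^ t * ∫ s, r s.1 s.2.1.1 (emp N s.2.2)
        ∂(pLawNFrom p p0 Γ pit θ N
          ((Measure.pi fun _ : Fin N => (μ : Measure X)).map fun x => (x0, (u0, ξ), x)) t))
    (Qlim : Θ → X0 → ProbabilityMeasure X → U0 → Xi → ℝ)
    (hQlim : ∀ (θ : Θ) (x0 : X0) (μ : ProbabilityMeasure X) (u0 : U0) (ξ : Xi),
      Qlim θ x0 μ u0 ξ = ∑' t : ℕ, γ ^ t * ∫ s, r s.1 s.2.1.1 s.2.2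
        ∂(pLimLawFrom p0 pit TG θ (Measure.dirac (x0, (u0, ξ), μ)) t)) :
    ∀ ε > (0 : ℝ), ∃ N0 : ℕ, ∀ N ≥ N0, ∀ θ : Θ,
      ‖(∑' t : ℕ, γ ^ t •
          ∫ s, Qhat N θ s.1 (emp N s.2.2) s.2.1.1 s.2.1.2 • score θ s.1 (emp N s.2.2) s.2.1
            ∂(pLawNFrom p p0 Γ pit θ N
              ((Measure.pi fun _ : Fin N => (μ0 : Measure X)).bind fun x =>
                ((pit θ x00 (emp N x) : Measure (U0 × Xi))).map fun a => (x00, a, x)) t))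
        - ∑' t : ℕ, γ ^ t •
          ∫ s, Qlim θ s.1 s.2.2 s.2.1.1 s.2.1.2 • score θ s.1 s.2.2 s.2.1
            ∂(pLimLawFrom p0 pit TG θ
              (((pit θ x00 μ0 : Measure (U0 × Xi))).map fun a => (x00, a, μ0)) t)‖ ≤ ε := by
  refine statement19_general (Lpit := Lpit) (Ls := Ls) p hp p0 hp0 r hr Γ hΓrule hΓ pit
    (fun θ => ?_) score hscoreB (fun θ => ?_) μ0 x00 TG hTG
    (abs_lt.mpr ⟨neg_one_lt_zero.trans hγ0, hγ1⟩) Qhat hQhat Qlim hQlim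
  · simpa using hpit θ θ
  · simpa using hscoreL θ θ
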